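/- Let k be an algebraically closed field with char k ∉ {2,3,5,7}, and let t_1,...,t_6 ∈ k(a_0,...,a_8) be the absolute invariants of binary octavics. Then the field k(t_1,...,t_6) has transcendence degree 5 over k; more precisely, t_1, t_2, t_3, t_4, t_5 are algebraically independent over k and t_6 is algebraic of degree exactly 5 over k(t_1, t_2, t_3, t_4, t_5). -/

import Mathlib

noncomputable section

open MvPolynomial


variable {k : Type*} [Field k]

/-- char k not in {2,3,5,7} -/
def CharOK (k : Type*) [Field k] : Prop :=
  ringChar k ≠ 2 ∧ ringChar k ≠ 3 ∧ ringChar k ≠ 5 ∧ ringChar k ≠ 7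

/-- the r-th transvectant of binary forms f, g of degrees n and m -/
def transvectant (n m r : ℕ) (f g : MvPolynomial (Fin 2) k) : MvPolynomial (Fin 2) k :=
  C ((((m - r).factorial * (n - r).factorial : ℕ) : k) /
      ((n.factorial * m.factorial : ℕ) : k)) *
    ∑ j ∈ Finset.range (r + 1),
      C ((-1 : k) ^ j * (r.choose j : k)) *
        ((fun p => pderiv (0 : Fin 2) p)^[r - j] ((fun p => pderiv (1 : Fin 2) p)^[j] f)) *
        ((fun p => pderiv (0 : Fin 2) p)^[j] ((fun p => pderiv (1 : Fin 2) p)^[r - j] g))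

/-- the binary octavic with coefficient vector a -/
def octForm (a : Fin 9 → k) : MvPolynomial (Fin 2) k :=
  ∑ i : Fin 9, C (a i) * X 0 ^ (i : ℕ) * X 1 ^ (8 - (i : ℕ))

def covg (a : Fin 9 → k) := transvectant 8 8 4 (octForm a) (octForm a)
def covk (a : Fin 9 → k) := transvectant 8 8 6 (octForm a) (octForm a)
def covh (a : Fin 9 → k) := transvectant 4 4 2 (covk a) (covk a)
def covm (a : Fin 9 → k) := transvectant 8 4 4 (octForm a) (covk a)
def covn (a : Fin 9 → k) := transvectant 8 4 4 (octForm a) (covh a)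
def covp (a : Fin 9 → k) := transvectant 8 4 4 (covg a) (covk a)
def covq (a : Fin 9 → k) := transvectant 8 4 4 (covg a) (covh a)

def J2 (a : Fin 9 → k) : k :=
  (2 ^ 2 * 5 * 7 : k) * constantCoeff (transvectant 8 8 8 (octForm a) (octForm a))
def J3 (a : Fin 9 → k) : k :=
  ((2 ^ 4 * 5 ^ 2 * 7 ^ 3 : k) / 3) * constantCoeff (transvectant 8 8 8 (octForm a) (covg a))
def J4 (a : Fin 9 → k) : k :=
  (2 ^ 9 * 3 * 7 ^ 4 : k) * constantCoeff (transvectant 4 4 4 (covk a) (covk a))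
def J5 (a : Fin 9 → k) : k :=
  (2 ^ 9 * 5 * 7 ^ 5 : k) * constantCoeff (transvectant 4 4 4 (covm a) (covk a))
def J6 (a : Fin 9 → k) : k :=
  (2 ^ 14 * 3 ^ 2 * 7 ^ 6 : k) * constantCoeff (transvectant 4 4 4 (covk a) (covh a))
def J7 (a : Fin 9 → k) : k :=
  (2 ^ 14 * 3 * 5 * 7 ^ 7 : k) * constantCoeff (transvectant 4 4 4 (covm a) (covh a))
def J8 (a : Fin 9 → k) : k :=
  (2 ^ 17 * 3 * 5 ^ 2 * 7 ^ 9 : k) * constantCoeff (transvectant 4 4 4 (covp a) (covh a))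
def J9 (a : Fin 9 → k) : k :=
  (2 ^ 19 * 3 ^ 2 * 5 * 7 ^ 9 : k) * constantCoeff (transvectant 4 4 4 (covn a) (covh a))
def J10 (a : Fin 9 → k) : k :=
  (2 ^ 22 * 3 ^ 2 * 5 ^ 2 * 7 ^ 11 : k) * constantCoeff (transvectant 4 4 4 (covq a) (covh a))

def Jinv : ℕ → (Fin 9 → k) → k
  | 2 => J2
  | 3 => J3
  | 4 => J4
  | 5 => J5
  | 6 => J6
  | 7 => J7
  | 8 => J8
  | 9 => J9
  | 10 => J10
  | _ => fun _ => 0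

/-- action of a 2x2 matrix on binary forms by substitution (X,Y) ↦ (aX+bY, cX+dY) -/
def substForm (g : Matrix (Fin 2) (Fin 2) k) (p : MvPolynomial (Fin 2) k) :
    MvPolynomial (Fin 2) k :=
  aeval (fun i : Fin 2 => C (g i 0) * X 0 + C (g i 1) * X 1) p

/-- coefficients of the transformed octavic -/
def octAct (g : Matrix (Fin 2) (Fin 2) k) (a : Fin 9 → k) : Fin 9 → k := fun i =>
  coeff (Finsupp.single (0 : Fin 2) (i : ℕ) + Finsupp.single (1 : Fin 2) (8 - (i : ℕ)))
    (substForm g (octForm a))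

/-- the generic coefficient vector, in the rational function field k(a_0, ..., a_8) -/
def genA (K : Type*) [Field K] : Fin 9 → FractionRing (MvPolynomial (Fin 9) K) :=
  fun i => algebraMap (MvPolynomial (Fin 9) K) (FractionRing (MvPolynomial (Fin 9) K)) (X i)

/-- the absolute invariants t_1, ..., t_6 as elements of k(a_0, ..., a_8) -/
def T1 (K : Type*) [Field K] : FractionRing (MvPolynomial (Fin 9) K) :=
  J3 (genA K) ^ 2 / J2 (genA K) ^ 3
def T2 (K : Type*) [Field K] : FractionRing (MvPolynomial (Fin 9) K) :=
  J4 (genA K) / J2 (genA K) ^ 2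
def T3 (K : Type*) [Field K] : FractionRing (MvPolynomial (Fin 9) K) :=
  J5 (genA K) / (J2 (genA K) * J3 (genA K))
def T4 (K : Type*) [Field K] : FractionRing (MvPolynomial (Fin 9) K) :=
  J6 (genA K) / (J2 (genA K) * J4 (genA K))
def T5 (K : Type*) [Field K] : FractionRing (MvPolynomial (Fin 9) K) :=
  J7 (genA K) / (J2 (genA K) * J5 (genA K))
def T6 (K : Type*) [Field K] : FractionRing (MvPolynomial (Fin 9) K) :=
  J8 (genA K) / J2 (genA K) ^ 4

def W884 : List (List (ℤ × ℕ × ℕ)) :=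
  [[(56,0,4), (-35,1,3), (30,2,2), (-35,3,1), (56,4,0)],
   [(280,0,5), (-84,1,4), (20,2,3), (20,3,2), (-84,4,1), (280,5,0)],
   [(840,0,6), (-70,1,5), (-44,2,4), (60,3,3), (-44,4,2), (-70,5,1), (840,6,0)],
   [(1960,0,7), (140,1,6), (-120,2,5), (36,3,4), (36,4,3), (-120,5,2), (140,6,1), (1960,7,0)],
   [(3920,0,8), (735,1,7), (-110,2,6), (-45,3,5), (72,4,4), (-45,5,3), (-110,6,2), (735,7,1), (3920,8,0)],
   [(1960,1,8), (140,2,7), (-120,3,6), (36,4,5), (36,5,4), (-120,6,3), (140,7,2), (1960,8,1)],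
   [(840,2,8), (-70,3,7), (-44,4,6), (60,5,5), (-44,6,4), (-70,7,3), (840,8,2)],
   [(280,3,8), (-84,4,7), (20,5,6), (20,6,5), (-84,7,4), (280,8,3)],
   [(56,4,8), (-35,5,7), (30,6,6), (-35,7,5), (56,8,4)]]

def W886 : List (List (ℤ × ℕ × ℕ)) :=
  [[(56,0,6), (-21,1,5), (12,2,4), (-10,3,3), (12,4,2), (-21,5,1), (56,6,0)],
   [(392,0,7), (-70,1,6), (18,2,5), (-4,3,4), (-4,4,3), (18,5,2), (-70,6,1), (392,7,0)],
   [(1568,0,8), (-49,1,7), (-16,2,6), (17,3,5), (-16,4,4), (17,5,3), (-16,6,2), (-49,7,1), (1568,8,0)],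
   [(392,1,8), (-70,2,7), (18,3,6), (-4,4,5), (-4,5,4), (18,6,3), (-70,7,2), (392,8,1)],
   [(56,2,8), (-21,3,7), (12,4,6), (-10,5,5), (12,6,4), (-21,7,3), (56,8,2)]]

def W888 : List (List (ℤ × ℕ × ℕ)) :=
  [[(280,0,8), (-35,1,7), (10,2,6), (-5,3,5), (4,4,4), (-5,5,3), (10,6,2), (-35,7,1), (280,8,0)]]

def W442 : List (List (ℤ × ℕ × ℕ)) :=
  [[(4,0,2), (-3,1,1), (4,2,0)],
   [(12,0,3), (-2,1,2), (-2,2,1), (12,3,0)],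
   [(24,0,4), (3,1,3), (-4,2,2), (3,3,1), (24,4,0)],
   [(12,1,4), (-2,2,3), (-2,3,2), (12,4,1)],
   [(4,2,4), (-3,3,3), (4,4,2)]]

def W844 : List (List (ℤ × ℕ × ℕ)) :=
  [[(280,0,4), (-35,1,3), (10,2,2), (-5,3,1), (4,4,0)],
   [(140,1,4), (-40,2,3), (20,3,2), (-16,4,1), (20,5,0)],
   [(60,2,4), (-30,3,3), (24,4,2), (-30,5,1), (60,6,0)],
   [(20,3,4), (-16,4,3), (20,5,2), (-40,6,1), (140,7,0)],
   [(4,4,4), (-5,5,3), (10,6,2), (-35,7,1), (280,8,0)]]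

def W444 : List (List (ℤ × ℕ × ℕ)) :=
  [[(12,0,4), (-3,1,3), (2,2,2), (-3,3,1), (12,4,0)]]

def Rel16 : List (ℤ × List ℕ) :=
  [(-5292000, [0,0,0,2,1,0,0,0,0]),
   (6160000, [0,0,1,0,2,0,0,0,0]),
   (7938000, [0,0,1,1,0,1,0,0,0]),
   (-38880000, [0,0,4,0,0,0,0,0,0]),
   (-1058400, [0,1,0,0,1,1,0,0,0]),
   (4233600, [0,1,2,1,0,0,0,0,0]),
   (1397760, [0,2,1,0,1,0,0,0,0]),
   (-3704400, [1,0,0,0,0,2,0,0,0]),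
   (297920000, [1,0,2,0,1,0,0,0,0]),
   (-8429568, [1,2,2,0,0,0,0,0,0]),
   (-1843968000, [2,0,3,0,0,0,0,0,0]),
   (-2556968960, [3,0,1,0,1,0,0,0,0]),
   (15420489728, [4,0,2,0,0,0,0,0,0]),
   (-1404000, [0,0,2,0,0,0,1,0,0]),
   (1058400, [1,0,0,0,1,0,1,0,0]),
   (-330750, [0,0,0,0,0,1,0,1,0]),
   (529200, [0,1,1,0,0,0,0,1,0]),
   (3704400, [1,0,0,1,0,0,0,1,0]),
   (84000, [0,0,0,0,1,0,0,0,1]),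
   (-4032, [0,2,0,0,0,0,0,0,1]),
   (-1411200, [1,0,1,0,0,0,0,0,1]),
   (7375872, [3,0,0,0,0,0,0,0,1]),
   (2025, [0,0,0,0,0,0,2,0,0])]

def Rel17 : List (ℤ × List ℕ) :=
  [(280000, [0,0,0,1,2,0,0,0,0]),
   (-510000, [0,0,1,0,1,1,0,0,0]),
   (75600, [0,1,0,0,0,2,0,0,0]),
   (80000, [0,1,2,0,1,0,0,0,0]),
   (107520, [0,2,0,1,1,0,0,0,0]),
   (-161280, [0,2,1,0,0,1,0,0,0]),
   (86016, [0,3,2,0,0,0,0,0,0]),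
   (10416000, [1,0,1,1,1,0,0,0,0]),
   (-9072000, [1,0,2,0,0,1,0,0,0]),
   (18816000, [1,1,3,0,0,0,0,0,0]),
   (19756800, [2,0,0,0,1,1,0,0,0]),
   (-79027200, [2,0,2,1,0,0,0,0,0]),
   (-196689920, [3,0,0,1,1,0,0,0,0]),
   (295034880, [3,0,1,0,0,1,0,0,0]),
   (-157351936, [3,1,2,0,0,0,0,0,0]),
   (-10800, [0,1,0,0,1,0,1,0,0]),
   (-75600, [1,0,0,0,0,1,1,0,0]),
   (180000, [0,0,2,0,0,0,0,1,0]),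
   (-75600, [0,1,0,1,0,0,0,1,0]),
   (-1568000, [1,0,0,0,1,0,0,1,0]),
   (75264, [1,2,0,0,0,0,0,1,0]),
   (6585600, [2,0,1,0,0,0,0,1,0]),
   (-137682944, [4,0,0,0,0,0,0,1,0]),
   (-3375, [0,0,0,0,0,1,0,0,1]),
   (5400, [0,1,1,0,0,0,0,0,1]),
   (37800, [1,0,0,1,0,0,0,0,1]),
   (6750, [0,0,0,0,0,0,1,1,0])]

def Rel18 : List (ℤ × List ℕ) :=
  [(3062500000, [0,0,0,0,3,0,0,0,0]),
   (-2381400000, [0,0,0,1,1,1,0,0,0]),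
   (-29160000000, [0,0,3,0,1,0,0,0,0]),
   (-3674160000, [0,1,1,1,1,0,0,0,0]),
   (7348320000, [0,1,2,0,0,1,0,0,0]),
   (12936000, [0,2,0,0,2,0,0,0,0]),
   (-4898880000, [0,2,3,0,0,0,0,0,0]),
   (28901376, [0,4,0,0,1,0,0,0,0]),
   (999600000, [1,0,1,0,2,0,0,0,0]),
   (-1028764800000, [1,0,4,0,0,0,0,0,0]),
   (2667168000, [1,1,0,0,1,1,0,0,0]),
   (-10668672000, [1,1,2,1,0,0,0,0,0]),
   (16437657600, [1,2,1,0,1,0,0,0,0]),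
   (18670176000, [2,0,0,0,0,2,0,0,0]),
   (2232518400000, [2,0,2,0,1,0,0,0,0]),
   (21242511360, [2,2,2,0,0,0,0,0,0]),
   (-23664256000, [3,0,0,0,2,0,0,0,0]),
   (13608483840000, [3,0,3,0,0,0,0,0,0]),
   (-105740500992, [3,2,0,0,1,0,0,0,0]),
   (-30069954969600, [4,0,1,0,1,0,0,0,0]),
   (-38859634114560, [5,0,2,0,0,0,0,0,0]),
   (96717311574016, [6,0,0,0,1,0,0,0,0]),
   (635850000, [0,0,1,0,1,0,1,0,0]),
   (-10206000, [0,1,0,0,0,1,1,0,0]),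
   (-21772800, [0,2,1,0,0,0,1,0,0]),
   (-8573040000, [1,0,2,0,0,0,1,0,0]),
   (-2667168000, [2,0,0,0,1,0,1,0,0]),
   (39829708800, [3,0,1,0,0,0,1,0,0]),
   (3572100000, [0,0,1,1,0,0,0,1,0]),
   (-449820000, [0,1,0,0,1,0,0,1,0]),
   (10160640, [0,3,0,0,0,0,0,1,0]),
   (889056000, [1,1,1,0,0,0,0,1,0]),
   (-18670176000, [2,0,0,1,0,0,0,1,0]),
   (-18587197440, [3,1,0,0,0,0,0,1,0]),
   (-328050000, [0,0,2,0,0,0,0,0,1]),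
   (5103000, [0,1,0,1,0,0,0,0,1]),
   (238140000, [1,0,0,0,1,0,0,0,1]),
   (1333584000, [2,0,1,0,0,0,0,0,1]),
   (-148837500, [0,0,0,0,0,0,0,2,0]),
   (455625, [0,0,0,0,0,0,1,0,1])]

def Rel19 : List (ℤ × List ℕ) :=
  [(-2734375, [0,0,0,0,2,1,0,0,0]),
   (2126250, [0,0,0,1,0,2,0,0,0]),
   (24300000, [0,0,2,1,1,0,0,0,0]),
   (-18225000, [0,0,3,0,0,1,0,0,0]),
   (3024000, [0,1,0,2,1,0,0,0,0]),
   (415000, [0,1,1,0,2,0,0,0,0]),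
   (-4536000, [0,1,1,1,0,1,0,0,0]),
   (-9720000, [0,1,4,0,0,0,0,0,0]),
   (537600, [0,2,0,0,1,1,0,0,0]),
   (2419200, [0,2,2,1,0,0,0,0,0]),
   (-860160, [0,3,1,0,1,0,0,0,0]),
   (5145000, [1,0,0,1,2,0,0,0,0]),
   (-28140000, [1,0,1,0,1,1,0,0,0]),
   (1020600000, [1,0,3,1,0,0,0,0,0]),
   (-2116800, [1,1,0,0,0,2,0,0,0]),
   (-190400000, [1,1,2,0,1,0,0,0,0]),
   (-9031680, [1,2,0,1,1,0,0,0,0]),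
   (4515840, [1,2,1,0,0,1,0,0,0]),
   (-2408448, [1,3,2,0,0,0,0,0,0]),
   (-818496000, [2,0,1,1,1,0,0,0,0]),
   (-1326528000, [2,0,2,0,0,1,0,0,0]),
   (-526848000, [2,1,3,0,0,0,0,0,0]),
   (-1536640000, [3,0,0,0,1,1,0,0,0]),
   (-2212761600, [3,0,2,1,0,0,0,0,0]),
   (1573519360, [3,1,1,0,1,0,0,0,0]),
   (16521953280, [4,0,0,1,1,0,0,0,0]),
   (-8260976640, [4,0,1,0,0,1,0,0,0]),
   (4405854208, [4,1,2,0,0,0,0,0,0]),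
   (-33750, [0,0,0,1,1,0,1,0,0]),
   (-506250, [0,0,1,0,0,1,1,0,0]),
   (864000, [0,1,2,0,0,0,1,0,0]),
   (4536000, [1,0,1,1,0,0,1,0,0]),
   (302400, [1,1,0,0,1,0,1,0,0]),
   (2116800, [2,0,0,0,0,1,1,0,0]),
   (-2126250, [0,0,0,2,0,0,0,1,0]),
   (2475000, [0,0,1,0,1,0,0,1,0]),
   (189000, [0,1,0,0,0,1,0,1,0]),
   (-302400, [0,2,1,0,0,0,0,1,0]),
   (8820000, [1,0,2,0,0,0,0,1,0]),
   (2116800, [1,1,0,1,0,0,0,1,0]),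
   (142688000, [2,0,0,0,1,0,0,1,0]),
   (-2107392, [2,2,0,0,0,0,0,1,0]),
   (368793600, [3,0,1,0,0,0,0,1,0]),
   (3855122432, [5,0,0,0,0,0,0,1,0]),
   (-54000, [0,1,0,0,1,0,0,0,1]),
   (-283500, [1,0,0,0,0,1,0,0,1]),
   (-151200, [1,1,1,0,0,0,0,0,1]),
   (-1058400, [2,0,0,1,0,0,0,0,1]),
   (33750, [0,0,0,0,0,0,0,1,1])]

def forceN {α : Type} (n : ℕ) (f : ℕ → α) : α :=
  Nat.rec (motive := fun _ => α) (f 0) (fun m _ => f (m + 1)) n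

def forceZ {α : Type} (z : ℤ) (f : ℤ → α) : α :=
  Int.rec (motive := fun _ => α) (fun n => forceN n (fun m => f (Int.ofNat m)))
    (fun n => forceN n (fun m => f (Int.negSucc m))) z

/-- forced dot product -/
def dotF (row : List (ℤ × ℕ × ℕ)) (a b : ℕ → ℤ) (acc : ℤ) (f : ℤ → Bool) : Bool :=
  List.rec (motive := fun _ => ℤ → Bool) (fun s => f s)
    (fun t _ ih s => forceZ (a t.2.1 * b t.2.2) (fun p => forceZ (s + t.1 * p) (fun s' => ih s')))
    row acc

def bilF (W : List (List (ℤ × ℕ × ℕ))) (a b : ℕ → ℤ) (f : List ℤ → Bool) : Bool :=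
  List.rec (motive := fun _ => (List ℤ → Bool) → Bool) (fun g => g [])
    (fun row _ ih g => dotF row a b 0 (fun s => ih (fun l => g (s :: l)))) W f

def lk (l : List ℤ) : ℕ → ℤ := fun i => l.getD i 0

/-- multiply acc by x^e, forced -/
def mulPowF (x : ℤ) (e : ℕ) (acc : ℤ) (f : ℤ → Bool) : Bool :=
  Nat.rec (motive := fun _ => ℤ → Bool) (fun s => f s)
    (fun _ ih s => forceZ (s * x) (fun s' => ih s')) e acc

def monF (es : List ℕ) (J : List ℤ) (acc : ℤ) (f : ℤ → Bool) : Bool :=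
  List.rec (motive := fun _ => List ℤ → ℤ → Bool) (fun _ s => f s)
    (fun e _ ih J s => mulPowF (J.headD 0) e s (fun s' => ih J.tail s')) es J acc

def relF (Rl : List (ℤ × List ℕ)) (J : List ℤ) (acc : ℤ) : Bool :=
  List.rec (motive := fun _ => ℤ → Bool) (fun s => decide (s = 0))
    (fun t _ ih s => monF t.2 J t.1 (fun p => forceZ (s + p) (fun s' => ih s')))
    Rl acc

def JsF (a : ℕ → ℤ) (f : List ℤ → Bool) : Bool :=
  bilF W886 a a fun kl => bilF W884 a a fun gl => bilF W442 (lk kl) (lk kl) fun hl =>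
  bilF W844 a (lk kl) fun ml => bilF W844 a (lk hl) fun nl =>
  bilF W844 (lk gl) (lk kl) fun pl => bilF W844 (lk gl) (lk hl) fun ql =>
  bilF W888 a a fun j2 => bilF W888 a (lk gl) fun j3 =>
  bilF W444 (lk kl) (lk kl) fun j4 => bilF W444 (lk ml) (lk kl) fun j5 =>
  bilF W444 (lk kl) (lk hl) fun j6 => bilF W444 (lk ml) (lk hl) fun j7 =>
  bilF W444 (lk pl) (lk hl) fun j8 => bilF W444 (lk nl) (lk hl) fun j9 =>
  bilF W444 (lk ql) (lk hl) fun j10 =>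
  f [lk j2 0, lk j3 0, lk j4 0, lk j5 0, lk j6 0, lk j7 0, lk j8 0, lk j9 0, lk j10 0]

def forceL (l : List ℤ) (f : List ℤ → Bool) : Bool :=
  List.rec (motive := fun _ => (List ℤ → Bool) → Bool) (fun g => g [])
    (fun x _ ih g => forceZ x (fun s => ih (fun l => g (s :: l)))) l f

/-- slice point: a4=a5=1, a0=a8=0 -/
def slP (e : ℕ) (s1 s2 s3 s6 s7 : ℕ) : List ℤ :=
  [0, ((2 ^ (e*s1) : ℕ) : ℤ), ((2 ^ (e*s2) : ℕ) : ℤ), ((2 ^ (e*s3) : ℕ) : ℤ), 1, 1,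
    ((2 ^ (e*s6) : ℕ) : ℤ), ((2 ^ (e*s7) : ℕ) : ℤ), 0]

def relChk (Rl : List (ℤ × List ℕ)) (e s1 s2 s3 s6 s7 : ℕ) : Bool :=
  forceL (slP e s1 s2 s3 s6 s7) fun al => JsF (lk al) fun J => forceL J fun J => relF Rl J 0

section generic
variable {R S : Type*} [CommRing R] [CommRing S]

def bil (W : List (List (ℤ × ℕ × ℕ))) (a b : ℕ → R) : ℕ → R := fun l =>
  ((W.getD l []).map fun t => (t.1 : R) * (a t.2.1 * b t.2.2)).sum

def zk (a : ℕ → R) := bil W886 a a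
def zg (a : ℕ → R) := bil W884 a a
def zh (a : ℕ → R) := bil W442 (zk a) (zk a)
def zm (a : ℕ → R) := bil W844 a (zk a)
def zn (a : ℕ → R) := bil W844 a (zh a)
def zp (a : ℕ → R) := bil W844 (zg a) (zk a)
def zq (a : ℕ → R) := bil W844 (zg a) (zh a)
def JZ (a : ℕ → R) : List R :=
  [bil W888 a a 0, bil W888 a (zg a) 0, bil W444 (zk a) (zk a) 0, bil W444 (zm a) (zk a) 0,
   bil W444 (zk a) (zh a) 0, bil W444 (zm a) (zh a) 0, bil W444 (zp a) (zh a) 0,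
   bil W444 (zn a) (zh a) 0, bil W444 (zq a) (zh a) 0]

def monZ (J : List R) (es : List ℕ) : R := (List.zipWith (fun x e => x ^ e) J es).prod
def relZ (Rl : List (ℤ × List ℕ)) (J : List R) : R :=
  (Rl.map fun t => (t.1 : R) * monZ J t.2).sum

lemma bil_map (f : R →+* S) (W) (a b : ℕ → R) :
    bil W (fun i => f (a i)) (fun i => f (b i)) = fun l => f (bil W a b l) := by
  funext l
  simp only [bil, map_list_sum, List.map_map]
  congr 1
  apply List.map_congr_left
  intro t _
  simp

lemma JZ_map (f : R →+* S) (a : ℕ → R) : JZ (fun i => f (a i)) = (JZ a).map f := by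
  have hk : zk (fun i => f (a i)) = fun l => f (zk a l) := bil_map f _ a a
  have hg : zg (fun i => f (a i)) = fun l => f (zg a l) := bil_map f _ a a
  have hh : zh (fun i => f (a i)) = fun l => f (zh a l) := by
    unfold zh; rw [hk]; exact bil_map f _ _ _
  have hm : zm (fun i => f (a i)) = fun l => f (zm a l) := by
    unfold zm; rw [hk]; exact bil_map f _ _ _
  have hn : zn (fun i => f (a i)) = fun l => f (zn a l) := by
    unfold zn; rw [hh]; exact bil_map f _ _ _
  have hp : zp (fun i => f (a i)) = fun l => f (zp a l) := by
    unfold zp; rw [hk, hg]; exact bil_map f _ _ _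
  have hq : zq (fun i => f (a i)) = fun l => f (zq a l) := by
    unfold zq; rw [hh, hg]; exact bil_map f _ _ _
  simp only [JZ, hk, hg, hh, hm, hn, hp, hq, bil_map f, List.map_cons, List.map_nil]

lemma monZ_map (f : R →+* S) (J : List R) (es) : monZ (J.map f) es = f (monZ J es) := by
  induction J generalizing es with
  | nil => simp [monZ]
  | cons x J ih =>
    cases es with
    | nil => simp [monZ]
    | cons e es => have := ih es; simp only [monZ] at this; simp [monZ, this]

lemma relZ_map (f : R →+* S) (Rl) (J : List R) : relZ Rl (J.map f) = f (relZ Rl J) := by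
  simp only [relZ, map_list_sum, List.map_map, monZ_map]
  congr 1
  apply List.map_congr_left
  intro t _
  simp
end generic

/-! majorants -/
def Bnd (P : MvPolynomial (Fin 5) ℤ) (B : ℕ × (Fin 5 → ℕ)) : Prop :=
  ∃ Q : MvPolynomial (Fin 5) ℕ, (∀ m, (coeff m P).natAbs ≤ coeff m Q) ∧
    eval (fun _ => 1) Q ≤ B.1 ∧ ∀ i, degreeOf i Q ≤ B.2 i

def Bnd.plus (A B : ℕ × (Fin 5 → ℕ)) : ℕ × (Fin 5 → ℕ) :=
  (A.1 + B.1, fun i => max (A.2 i) (B.2 i))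
def Bnd.times (A B : ℕ × (Fin 5 → ℕ)) : ℕ × (Fin 5 → ℕ) :=
  (A.1 * B.1, fun i => A.2 i + B.2 i)
def Bnd.cst (n : ℕ) : ℕ × (Fin 5 → ℕ) := (n, fun _ => 0)

lemma Bnd.add {P P' A A'} (h : Bnd P A) (h' : Bnd P' A') : Bnd (P + P') (Bnd.plus A A') := by
  obtain ⟨Q, h1, h2, h3⟩ := h
  obtain ⟨Q', h1', h2', h3'⟩ := h'
  refine ⟨Q + Q', fun m => ?_, ?_, fun i => ?_⟩
  · rw [coeff_add, coeff_add]
    exact (Int.natAbs_add_le _ _).trans (add_le_add (h1 m) (h1' m))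
  · rw [map_add]; exact add_le_add h2 h2'
  · exact (degreeOf_add_le _ _ _).trans (max_le_max (h3 i) (h3' i))

lemma Bnd.mul {P P' A A'} (h : Bnd P A) (h' : Bnd P' A') : Bnd (P * P') (Bnd.times A A') := by
  obtain ⟨Q, h1, h2, h3⟩ := h
  obtain ⟨Q', h1', h2', h3'⟩ := h'
  refine ⟨Q * Q', fun m => ?_, ?_, fun i => ?_⟩
  · rw [coeff_mul, coeff_mul]
    refine (Int.natAbs_sum_le _ _).trans (Finset.sum_le_sum fun x _ => ?_)
    rw [Int.natAbs_mul]
    exact Nat.mul_le_mul (h1 _) (h1' _)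
  · rw [map_mul]; exact Nat.mul_le_mul h2 h2'
  · exact (degreeOf_mul_le _ _ _).trans (add_le_add (h3 i) (h3' i))

lemma Bnd.C (c : ℤ) : Bnd (MvPolynomial.C c) (Bnd.cst c.natAbs) := by
  refine ⟨MvPolynomial.C c.natAbs, fun m => ?_, ?_, fun i => ?_⟩
  · rw [coeff_C, coeff_C]; split <;> simp
  · simp [Bnd.cst]
  · exact (degreeOf_C _ _).le

lemma Bnd.int (c : ℤ) : Bnd ((c : ℤ) : MvPolynomial (Fin 5) ℤ) (Bnd.cst c.natAbs) := by
  have := Bnd.C c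
  simpa using this

lemma Bnd.var (j : Fin 5) : Bnd (X j) (1, Pi.single j 1) := by
  refine ⟨X j, fun m => ?_, ?_, fun i => ?_⟩
  · rw [coeff_X, coeff_X]; split <;> simp
  · simp
  · classical
    rw [degreeOf_X]
    by_cases h : i = j
    · subst h; simp
    · simp [h]

lemma Bnd.zero : Bnd 0 (Bnd.cst 0) := by simpa using Bnd.C 0
lemma Bnd.one : Bnd 1 (Bnd.cst 1) := by simpa using Bnd.C 1

lemma Bnd.mono {P A B} (h : Bnd P A) (h1 : A.1 ≤ B.1) (h2 : ∀ i, A.2 i ≤ B.2 i) : Bnd P B := by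
  obtain ⟨Q, a, b, c⟩ := h
  exact ⟨Q, a, b.trans h1, fun i => (c i).trans (h2 i)⟩

lemma Bnd.pow {P A} (h : Bnd P A) (e : ℕ) : Bnd (P ^ e) (A.1 ^ e, fun i => e * A.2 i) := by
  induction e with
  | zero => rw [pow_zero]; exact Bnd.one.mono (by simp [Bnd.cst]) (by simp [Bnd.cst])
  | succ n ih =>
    rw [pow_succ]
    exact (ih.mul h).mono (by simp [Bnd.times, pow_succ]) (by intro i; simp [Bnd.times]; lia)

def bilB (W : List (List (ℤ × ℕ × ℕ))) (a b : ℕ → ℕ × (Fin 5 → ℕ)) : ℕ → ℕ × (Fin 5 → ℕ) :=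
  fun l => (W.getD l []).foldr
    (fun t s => Bnd.plus (Bnd.times (Bnd.cst t.1.natAbs) (Bnd.times (a t.2.1) (b t.2.2))) s)
    (Bnd.cst 0)

lemma Bnd.bil {W a b A B} (ha : ∀ i, Bnd (a i) (A i)) (hb : ∀ i, Bnd (b i) (B i)) (l) :
    Bnd (bil W a b l) (bilB W A B l) := by
  unfold _root_.bil bilB
  induction W.getD l [] with
  | nil => exact Bnd.zero
  | cons t L ih =>
    rw [List.map_cons, List.sum_cons]
    exact ((Bnd.int _).mul ((ha _).mul (hb _))).add ih

lemma kron (P : MvPolynomial (Fin 5) ℤ) (N : ℕ) (r : Fin 5 → ℕ) (b : ℕ) (hP : Bnd P (N, r))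
    (hb : N < b)
    (h0 : eval ![(b:ℤ) ^ 1, (b:ℤ) ^ (r 0 + 1), (b:ℤ) ^ ((r 0 + 1) * (r 1 + 1)),
      (b:ℤ) ^ ((r 0 + 1) * (r 1 + 1) * (r 2 + 1)),
      (b:ℤ) ^ ((r 0 + 1) * (r 1 + 1) * (r 2 + 1) * (r 3 + 1))] P = 0) : P = 0 := by
  classical
  obtain ⟨Q, h1, h2, h3⟩ := hP
  by_contra hne
  have hs : P.support.Nonempty := by rwa [Finset.nonempty_iff_ne_empty, Ne, support_eq_empty]
  let φ : (Fin 5 →₀ ℕ) → ℕ := fun m => m 0 + (r 0 + 1) * (m 1 + (r 1 + 1) * (m 2 + (r 2 + 1) *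
    (m 3 + (r 3 + 1) * m 4)))
  obtain ⟨m0, hm0, hmin⟩ := Finset.exists_min_image P.support φ hs
  have hbox : ∀ m ∈ P.support, ∀ i, m i < r i + 1 := by
    intro m hm i
    have : m ∈ Q.support := by
      rw [mem_support_iff] at hm ⊢
      have := h1 m
      intro h; rw [h] at this; simp at this; exact hm this
    have h4 := (monomial_le_degreeOf i this).trans (h3 i)
    simp only at h4
    lia
  have key : ∀ (r a b a' b' : ℕ), a < r → a' < r → a + r * b = a' + r * b' → a = a' ∧ b = b' := by
    intro r a b a' b' h h' e
    have e1 := congrArg (· % r) e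
    simp [Nat.add_mul_mod_self_left, Nat.mod_eq_of_lt h, Nat.mod_eq_of_lt h'] at e1
    subst e1
    have : r * b = r * b' := by omega
    exact ⟨rfl, Nat.eq_of_mul_eq_mul_left (by omega) this⟩
  have hinj : ∀ m ∈ P.support, φ m = φ m0 → m = m0 := by
    intro m hm e
    obtain ⟨e0, e⟩ := key _ _ _ _ _ (hbox m hm 0) (hbox m0 hm0 0) e
    obtain ⟨e1, e⟩ := key _ _ _ _ _ (hbox m hm 1) (hbox m0 hm0 1) e
    obtain ⟨e2, e⟩ := key _ _ _ _ _ (hbox m hm 2) (hbox m0 hm0 2) e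
    obtain ⟨e3, e⟩ := key _ _ _ _ _ (hbox m hm 3) (hbox m0 hm0 3) e
    ext i
    fin_cases i <;> simpa
  have hev : eval ![(b:ℤ) ^ 1, (b:ℤ) ^ (r 0 + 1), (b:ℤ) ^ ((r 0 + 1) * (r 1 + 1)),
      (b:ℤ) ^ ((r 0 + 1) * (r 1 + 1) * (r 2 + 1)),
      (b:ℤ) ^ ((r 0 + 1) * (r 1 + 1) * (r 2 + 1) * (r 3 + 1))] P
      = ∑ m ∈ P.support, coeff m P * (b : ℤ) ^ φ m := by
    rw [eval_eq']
    refine Finset.sum_congr rfl fun m _ => ?_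
    congr 1
    rw [Fin.prod_univ_five]
    simp only [Matrix.cons_val, ← pow_mul, ← pow_add]
    congr 1
    simp only [φ]
    ring
  rw [hev, ← Finset.add_sum_erase _ _ hm0] at h0
  have hd : (b : ℤ) ^ (φ m0 + 1) ∣ ∑ m ∈ P.support.erase m0, coeff m P * (b : ℤ) ^ φ m := by
    refine Finset.dvd_sum fun m hm => ?_
    rw [Finset.mem_erase] at hm
    refine Dvd.dvd.mul_left (pow_dvd_pow _ ?_) _
    have := hmin m hm.2
    have h5 : φ m ≠ φ m0 := fun e => hm.1 (hinj m hm.2 e)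
    lia
  have hd2 : (b : ℤ) ^ (φ m0 + 1) ∣ coeff m0 P * (b : ℤ) ^ φ m0 := by
    rw [eq_neg_of_add_eq_zero_left h0]
    exact (dvd_neg).2 hd
  have hbpos : (b : ℤ) ≠ 0 := by
    have : 0 < b := by lia
    exact_mod_cast this.ne'
  rw [pow_succ', mul_dvd_mul_iff_right (pow_ne_zero _ hbpos)] at hd2
  have hc : (coeff m0 P).natAbs ≤ N := by
    refine (h1 m0).trans (le_trans ?_ h2)
    rw [eval_eq']
    simp only [one_pow, Finset.prod_const_one, mul_one]
    by_cases hm : m0 ∈ Q.support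
    · exact Finset.single_le_sum (f := fun m => coeff m Q) (fun _ _ => Nat.zero_le _) hm
    · rw [notMem_support_iff.1 hm]; exact Nat.zero_le _
  have := Int.eq_zero_of_dvd_of_natAbs_lt_natAbs hd2 (by simpa using lt_of_le_of_lt hc hb)
  exact (mem_support_iff.1 hm0) this

lemma forceN_eq {α : Type} (n : ℕ) (f : ℕ → α) : forceN n f = f n := by
  cases n <;> rfl
lemma forceZ_eq {α : Type} (z : ℤ) (f : ℤ → α) : forceZ z f = f z := by
  cases z with
  | ofNat n => exact forceN_eq n (fun m => f (Int.ofNat m))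
  | negSucc n => exact forceN_eq n (fun m => f (Int.negSucc m))
lemma dotF_eq (row) (a b : ℕ → ℤ) (acc) (f) :
    dotF row a b acc f = f (acc + (row.map fun t => t.1 * (a t.2.1 * b t.2.2)).sum) := by
  induction row generalizing acc with
  | nil => simp [dotF]
  | cons t L ih =>
    have : dotF (t :: L) a b acc f = forceZ (a t.2.1 * b t.2.2)
        (fun p => forceZ (acc + t.1 * p) (fun s' => dotF L a b s' f)) := rfl
    rw [this, forceZ_eq, forceZ_eq, ih, List.map_cons, List.sum_cons, add_assoc]
lemma bilF_eq (W) (a b : ℕ → ℤ) (f) :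
    bilF W a b f = f (W.map fun row => (row.map fun t => t.1 * (a t.2.1 * b t.2.2)).sum) := by
  induction W generalizing f with
  | nil => rfl
  | cons t L ih =>
    have : bilF (t :: L) a b f = dotF t a b 0 (fun s => bilF L a b (fun l => f (s :: l))) := rfl
    rw [this, dotF_eq, ih, List.map_cons, zero_add]
lemma lk_bil (W) (a b : ℕ → ℤ) :
    lk (W.map fun row => (row.map fun t => t.1 * (a t.2.1 * b t.2.2)).sum) = bil W a b := by
  funext l
  simp only [lk, bil, List.getD_eq_getElem?_getD, List.getElem?_map]
  cases W[l]? <;> simp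
lemma mulPowF_eq (x e acc f) : mulPowF x e acc f = f (acc * x ^ e) := by
  induction e generalizing acc with
  | zero => simp [mulPowF]
  | succ n ih =>
    have : mulPowF x (n+1) acc f = forceZ (acc * x) (fun s' => mulPowF x n s' f) := rfl
    rw [this, forceZ_eq, ih, pow_succ', mul_assoc]
lemma monF_eq (es J acc f) (h : es.length = J.length) : monF es J acc f = f (acc * monZ J es) := by
  induction es generalizing J acc with
  | nil => cases J <;> simp_all [monF, monZ]
  | cons e es ih =>
    cases J with
    | nil => simp at h
    | cons x J =>
      have : monF (e :: es) (x :: J) acc f = mulPowF x e acc (fun s' => monF es J s' f) := rfl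
      rw [this, mulPowF_eq, ih _ _ (by simpa using h)]
      simp [monZ, mul_assoc]
lemma relF_eq (Rl : List (ℤ × List ℕ)) (J acc) (h : ∀ t ∈ Rl, t.2.length = J.length) :
    relF Rl J acc = decide (acc + relZ Rl J = 0) := by
  induction Rl generalizing acc with
  | nil => simp [relF, relZ]
  | cons t L ih =>
    have : relF (t :: L) J acc = monF t.2 J t.1 (fun p => forceZ (acc + p) (fun s' => relF L J s')) :=
      rfl
    rw [this, monF_eq _ _ _ _ (h t (by simp)), forceZ_eq, ih _ (fun t ht => h t (by simp [ht]))]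
    simp [relZ, add_assoc]
lemma forceL_eq (l f) : forceL l f = f l := by
  induction l generalizing f with
  | nil => rfl
  | cons x l ih =>
    have : forceL (x :: l) f = forceZ x (fun s => forceL l (fun l => f (s :: l))) := rfl
    rw [this, forceZ_eq, ih]
lemma JsF_eq (a f) : JsF a f = f (JZ a) := by
  simp only [JsF, bilF_eq, lk_bil, JZ, zk, zg, zh, zm, zn, zp, zq]
lemma relChk_eq {Rl e s1 s2 s3 s6 s7} (h : relChk Rl e s1 s2 s3 s6 s7 = true)
    (hl : ∀ t ∈ Rl, t.2.length = 9) : relZ Rl (JZ (lk (slP e s1 s2 s3 s6 s7))) = 0 := by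
  unfold relChk at h
  rw [forceL_eq, JsF_eq, forceL_eq, relF_eq _ _ _ (by intro t ht; rw [hl t ht]; rfl)] at h
  simpa using h

theorem chk16 : relChk Rel16 108 1 10 110 1430 15730 = true := by decide +kernel
theorem chk17 : relChk Rel17 110 1 10 110 1430 15730 = true := by decide +kernel
theorem chk18 : relChk Rel18 128 1 11 132 1848 22176 = true := by decide +kernel
theorem chk19 : relChk Rel19 124 1 11 132 1980 23760 = true := by decide +kernel

/-- slice coefficients over any ring -/
def slA {R : Type*} [CommRing R] (x : Fin 5 → R) : ℕ → R :=
  fun i => ([0, x 0, x 1, x 2, 1, 1, x 3, x 4, 0] : List R).getD i 0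
def slB : ℕ → ℕ × (Fin 5 → ℕ) := fun i =>
  ([Bnd.cst 0, (1, Pi.single 0 1), (1, Pi.single 1 1), (1, Pi.single 2 1), Bnd.cst 1, Bnd.cst 1,
   (1, Pi.single 3 1), (1, Pi.single 4 1), Bnd.cst 0]).getD i (Bnd.cst 0)

lemma slA_bnd (i) : Bnd (slA (X : Fin 5 → MvPolynomial (Fin 5) ℤ) i) (slB i) := by
  match i with
  | 0 => exact Bnd.zero
  | 1 => exact Bnd.var 0
  | 2 => exact Bnd.var 1
  | 3 => exact Bnd.var 2
  | 4 => exact Bnd.one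
  | 5 => exact Bnd.one
  | 6 => exact Bnd.var 3
  | 7 => exact Bnd.var 4
  | 8 => exact Bnd.zero
  | (n+9) => exact Bnd.zero

def zkB := bilB W886 slB slB
def zgB := bilB W884 slB slB
def zhB := bilB W442 zkB zkB
def zmB := bilB W844 slB zkB
def znB := bilB W844 slB zhB
def zpB := bilB W844 zgB zkB
def zqB := bilB W844 zgB zhB

def JBs : List (ℕ × (Fin 5 → ℕ)) :=
  [(104, ![1,1,1,1,1]),
   (33648, ![1,2,2,2,1]),
   (406560, ![2,2,3,2,2]),
   (54849792, ![2,3,4,3,2]),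
   (1121250816, ![3,3,4,3,3]),
   (150995054592, ![4,4,5,4,4]),
   (82728040218624, ![4,5,6,5,4]),
   (415707682111488, ![5,5,6,5,5]),
   (231924514249506816, ![5,6,7,6,5])]

def leB (A B : ℕ × (Fin 5 → ℕ)) : Bool := decide (A.1 ≤ B.1) && decide (∀ i, A.2 i ≤ B.2 i)

lemma Bnd.leB {P A B} (h : Bnd P A) (h1 : _root_.leB A B = true) : Bnd P B := by
  simp only [_root_.leB, Bool.and_eq_true, decide_eq_true_eq] at h1
  exact h.mono h1.1 h1.2

lemma JZ_bnd : List.Forall₂ Bnd (JZ (slA (X : Fin 5 → MvPolynomial (Fin 5) ℤ))) JBs := by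
  have ha := slA_bnd
  have hk : ∀ i, Bnd (zk (slA X) i) (zkB i) := Bnd.bil ha ha
  have hg : ∀ i, Bnd (zg (slA X) i) (zgB i) := Bnd.bil ha ha
  have hh : ∀ i, Bnd (zh (slA X) i) (zhB i) := Bnd.bil hk hk
  have hm : ∀ i, Bnd (zm (slA X) i) (zmB i) := Bnd.bil ha hk
  have hn : ∀ i, Bnd (zn (slA X) i) (znB i) := Bnd.bil ha hh
  have hp : ∀ i, Bnd (zp (slA X) i) (zpB i) := Bnd.bil hg hk
  have hq : ∀ i, Bnd (zq (slA X) i) (zqB i) := Bnd.bil hg hh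
  refine .cons ?_ (.cons ?_ (.cons ?_ (.cons ?_ (.cons ?_ (.cons ?_ (.cons ?_ (.cons ?_
    (.cons ?_ .nil))))))))
  · exact (Bnd.bil ha ha 0).leB (by decide +kernel)
  · exact (Bnd.bil ha hg 0).leB (by decide +kernel)
  · exact (Bnd.bil hk hk 0).leB (by decide +kernel)
  · exact (Bnd.bil hm hk 0).leB (by decide +kernel)
  · exact (Bnd.bil hk hh 0).leB (by decide +kernel)
  · exact (Bnd.bil hm hh 0).leB (by decide +kernel)
  · exact (Bnd.bil hp hh 0).leB (by decide +kernel)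
  · exact (Bnd.bil hn hh 0).leB (by decide +kernel)
  · exact (Bnd.bil hq hh 0).leB (by decide +kernel)

def monB : List (ℕ × (Fin 5 → ℕ)) → List ℕ → ℕ × (Fin 5 → ℕ)
  | A :: L, e :: es => Bnd.times (A.1 ^ e, fun i => e * A.2 i) (monB L es)
  | _, _ => Bnd.cst 1

lemma Bnd.mon {J L} (h : List.Forall₂ Bnd J L) (es) : Bnd (monZ J es) (monB L es) := by
  induction h generalizing es with
  | nil => simpa [monZ, monB] using Bnd.one
  | cons h _ ih =>
    cases es with
    | nil => simpa [monZ, monB] using Bnd.one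
    | cons e es => simpa [monZ, monB] using (h.pow e).mul (ih es)

def relB (Rl : List (ℤ × List ℕ)) (L : List (ℕ × (Fin 5 → ℕ))) : ℕ × (Fin 5 → ℕ) :=
  Rl.foldr (fun t s => Bnd.plus (Bnd.times (Bnd.cst t.1.natAbs) (monB L t.2)) s) (Bnd.cst 0)

lemma Bnd.rel {J L} (h : List.Forall₂ Bnd J L) (Rl) : Bnd (relZ Rl J) (relB Rl L) := by
  induction Rl with
  | nil => exact Bnd.zero
  | cons t Rl ih =>
    have : relZ (t :: Rl) J = (t.1 : MvPolynomial (Fin 5) ℤ) * monZ J t.2 + relZ Rl J := by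
      simp [relZ]
    rw [this]
    exact ((Bnd.int _).mul (Bnd.mon h _)).add ih

lemma slice_zero {Rl : List (ℤ × List ℕ)} {e : ℕ} {r : Fin 5 → ℕ} {s2 s3 s6 s7 : ℕ}
    (h : relChk Rl e 1 s2 s3 s6 s7 = true) (hl : ∀ t ∈ Rl, t.2.length = 9)
    (h2 : s2 = r 0 + 1) (h3 : s3 = (r 0 + 1) * (r 1 + 1))
    (h6 : s6 = (r 0 + 1) * (r 1 + 1) * (r 2 + 1))
    (h7 : s7 = (r 0 + 1) * (r 1 + 1) * (r 2 + 1) * (r 3 + 1))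
    (hB : leB (relB Rl JBs) (2 ^ e - 1, r) = true)
    {R : Type*} [CommRing R] (x : Fin 5 → R) : relZ Rl (JZ (slA x)) = 0 := by
  have h0 := relChk_eq h hl
  have key : relZ Rl (JZ (slA (X : Fin 5 → MvPolynomial (Fin 5) ℤ))) = 0 := by
    refine kron _ (2 ^ e - 1) r (2 ^ e) ((Bnd.rel JZ_bnd Rl).leB hB)
      (Nat.sub_lt (by positivity) one_pos) ?_
    rw [← relZ_map, ← JZ_map, ← h0]
    congr 2
    funext i
    subst h2 h3 h6 h7
    match i with
    | 0 => simp [slA, lk, slP]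
    | 1 => simp [slA, lk, slP]
    | 2 => simp [slA, lk, slP, pow_mul]
    | 3 => simp [slA, lk, slP, pow_mul]
    | 4 => simp [slA, lk, slP]
    | 5 => simp [slA, lk, slP]
    | 6 => simp [slA, lk, slP, pow_mul]
    | 7 => simp [slA, lk, slP, pow_mul]
    | 8 => simp [slA, lk, slP]
    | (n+9) => simp [slA, lk, slP]
  have h1 : slA x = fun i => (eval₂Hom (Int.castRingHom R) x)
      (slA (X : Fin 5 → MvPolynomial (Fin 5) ℤ) i) := by
    funext i
    match i with
    | 0 => simp [slA]
    | 1 => simp [slA]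
    | 2 => simp [slA]
    | 3 => simp [slA]
    | 4 => simp [slA]
    | 5 => simp [slA]
    | 6 => simp [slA]
    | 7 => simp [slA]
    | 8 => simp [slA]
    | (n+9) => simp [slA]
  rw [h1, JZ_map, relZ_map, key, map_zero]

section
variable {R : Type*} [CommRing R] (x : Fin 5 → R)
lemma slice16 : relZ Rel16 (JZ (slA x)) = 0 :=
  slice_zero chk16 (by decide) (r := ![9,10,12,10,9]) rfl rfl rfl rfl (by decide +kernel) x
lemma slice17 : relZ Rel17 (JZ (slA x)) = 0 :=
  slice_zero chk17 (by decide) (r := ![9,10,12,10,9]) rfl rfl rfl rfl (by decide +kernel) x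
lemma slice18 : relZ Rel18 (JZ (slA x)) = 0 :=
  slice_zero chk18 (by decide) (r := ![10,11,13,11,10]) rfl rfl rfl rfl (by decide +kernel) x
lemma slice19 : relZ Rel19 (JZ (slA x)) = 0 :=
  slice_zero chk19 (by decide) (r := ![10,11,14,11,10]) rfl rfl rfl rfl (by decide +kernel) x
end

section forms
variable {F : Type*} [Field F]

def form (n : ℕ) (a : ℕ → F) : MvPolynomial (Fin 2) F :=
  ∑ i ∈ Finset.range (n + 1), C (a i) * X 0 ^ i * X 1 ^ (n - i)

lemma form_congr (n : ℕ) {a b : ℕ → F} (h : ∀ i ≤ n, a i = b i) : form n a = form n b :=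
  Finset.sum_congr rfl fun i hi => by rw [h i (by simpa [Nat.lt_succ_iff] using hi)]

lemma form_add (n : ℕ) (a b : ℕ → F) : form n a + form n b = form n (fun i => a i + b i) := by
  simp only [form, ← Finset.sum_add_distrib]
  exact Finset.sum_congr rfl fun i _ => by rw [C_add]; ring

lemma form_smul (n : ℕ) (c : F) (a : ℕ → F) : C c * form n a = form n (fun i => c * a i) := by
  simp only [form, Finset.mul_sum]
  exact Finset.sum_congr rfl fun i _ => by rw [C_mul]; ring

lemma form_mul (p q : ℕ) (a b : ℕ → F) : form p a * form q b =
    form (p + q) (fun l => ∑ i ∈ Finset.range (p + 1),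
      if i ≤ l ∧ l - i ≤ q then a i * b (l - i) else 0) := by
  simp only [form, Finset.sum_mul, map_sum]
  rw [Finset.sum_comm]
  refine Finset.sum_congr rfl fun i hi => ?_
  rw [Finset.mul_sum]
  have hi' : i ≤ p := by simpa [Nat.lt_succ_iff] using hi
  symm
  refine Finset.sum_bij_ne_zero (fun l _ _ => l - i) ?_ ?_ ?_ ?_
  · intro l hl h
    by_cases hc : i ≤ l ∧ l - i ≤ q
    · simpa [Nat.lt_succ_iff] using hc.2
    · exact absurd (by rw [if_neg hc]; simp) h
  · intro l hl h l' hl' h' e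
    by_cases hc : i ≤ l ∧ l - i ≤ q
    · by_cases hc' : i ≤ l' ∧ l' - i ≤ q
      · lia
      · exact absurd (by rw [if_neg hc']; simp) h'
    · exact absurd (by rw [if_neg hc]; simp) h
  · intro j hj h
    have hj' : j ≤ q := by simpa [Nat.lt_succ_iff] using hj
    have hc : i ≤ i + j ∧ i + j - i ≤ q := by lia
    refine ⟨i + j, by simp; lia, ?_, by simp⟩
    rw [if_pos hc]
    have e1 : i + j - i = j := by lia
    have e2 : p + q - (i + j) = (p - i) + (q - j) := by lia
    rw [e1, e2]
    convert h using 1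
    rw [C_mul]; ring
  · intro l hl h
    by_cases hc : i ≤ l ∧ l - i ≤ q
    · rw [if_pos hc]
      have e2 : p + q - l = (p - i) + (q - (l - i)) := by lia
      have e3 : (X 0 : MvPolynomial (Fin 2) F) ^ l = X 0 ^ i * X 0 ^ (l - i) := by
        rw [← pow_add]; congr 1; lia
      rw [e2, e3, C_mul]; ring
    · exact absurd (by rw [if_neg hc]; simp) h

lemma form_pd0 (n : ℕ) (a : ℕ → F) :
    pderiv 0 (form (n + 1) a) = form n (fun i => ((i + 1 : ℕ) : F) * a (i + 1)) := by
  simp only [form, map_sum]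
  rw [Finset.sum_range_succ']
  simp only [Derivation.leibniz, pderiv_C, Derivation.leibniz_pow, pderiv_X_self,
    pderiv_X_of_ne (show (1 : Fin 2) ≠ 0 by decide), smul_zero, mul_zero, pow_zero, nsmul_eq_mul,
    smul_eq_mul, Nat.cast_zero, zero_mul, add_zero, mul_one, zero_add]
  refine Finset.sum_congr rfl fun i hi => ?_
  have : n + 1 - (i + 1) = n - i := by lia
  rw [this, C_mul, C_eq_coe_nat, Nat.add_sub_cancel]; ring

lemma form_pd1 (n : ℕ) (a : ℕ → F) :
    pderiv 1 (form (n + 1) a) = form n (fun i => ((n + 1 - i : ℕ) : F) * a i) := by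
  simp only [form, map_sum]
  rw [Finset.sum_range_succ]
  simp only [Derivation.leibniz, pderiv_C, Derivation.leibniz_pow, pderiv_X_self,
    pderiv_X_of_ne (show (0 : Fin 2) ≠ 1 by decide), smul_zero, mul_zero, pow_zero, nsmul_eq_mul,
    smul_eq_mul, Nat.cast_zero, zero_mul, add_zero, mul_one, zero_add, Nat.sub_self]
  refine Finset.sum_congr rfl fun i hi => ?_
  have : n + 1 - i - 1 = n - i := by lia
  rw [this, C_mul, C_eq_coe_nat]; ring

lemma form_zero_eq (a : ℕ → F) : constantCoeff (form 0 a) = a 0 := by simp [form]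

def tc (F : Type*) [Field F] (n m r : ℕ) : F :=
  (((m - r).factorial * (n - r).factorial : ℕ) : F) / ((n.factorial * m.factorial : ℕ) : F)

lemma tv442 (a b : ℕ → F) : transvectant 4 4 2 (form 4 a) (form 4 b) =
    form 4 (fun l => tc F 4 4 2 * 6 * bil W442 a b l) := by
  unfold transvectant
  change C (tc F 4 4 2) * _ = _
  generalize tc F 4 4 2 = t
  simp only [Finset.sum_range_succ, Finset.sum_range_zero, Function.iterate_succ,
    Function.iterate_zero, Function.comp, id, Nat.reduceSub, form_pd0, form_pd1, form_mul, form_add,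
    form_smul, zero_add, mul_assoc, Nat.reduceAdd]
  refine form_congr _ fun l hl => ?_
  interval_cases l <;> simp [bil, W442, Nat.choose, -mul_eq_mul_left_iff] <;> ring

lemma tv444 (a b : ℕ → F) : transvectant 4 4 4 (form 4 a) (form 4 b) =
    form 0 (fun l => tc F 4 4 4 * 48 * bil W444 a b l) := by
  unfold transvectant
  change C (tc F 4 4 4) * _ = _
  generalize tc F 4 4 4 = t
  simp only [Finset.sum_range_succ, Finset.sum_range_zero, Function.iterate_succ,
    Function.iterate_zero, Function.comp, id, Nat.reduceSub, form_pd0, form_pd1, form_mul, form_add,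
    form_smul, zero_add, mul_assoc, Nat.reduceAdd]
  refine form_congr _ fun l hl => ?_
  interval_cases l <;> simp [bil, W444, Nat.choose, -mul_eq_mul_left_iff] <;> ring

lemma tv844 (a b : ℕ → F) : transvectant 8 4 4 (form 8 a) (form 4 b) =
    form 4 (fun l => tc F 8 4 4 * 144 * bil W844 a b l) := by
  unfold transvectant
  change C (tc F 8 4 4) * _ = _
  generalize tc F 8 4 4 = t
  simp only [Finset.sum_range_succ, Finset.sum_range_zero, Function.iterate_succ,
    Function.iterate_zero, Function.comp, id, Nat.reduceSub, form_pd0, form_pd1, form_mul, form_add,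
    form_smul, zero_add, mul_assoc, Nat.reduceAdd]
  refine form_congr _ fun l hl => ?_
  interval_cases l <;> simp [bil, W844, Nat.choose, -mul_eq_mul_left_iff] <;> ring

lemma tv884 (a b : ℕ → F) : transvectant 8 8 4 (form 8 a) (form 8 b) =
    form 8 (fun l => tc F 8 8 4 * 720 * bil W884 a b l) := by
  unfold transvectant
  change C (tc F 8 8 4) * _ = _
  generalize tc F 8 8 4 = t
  simp only [Finset.sum_range_succ, Finset.sum_range_zero, Function.iterate_succ,
    Function.iterate_zero, Function.comp, id, Nat.reduceSub, form_pd0, form_pd1, form_mul, form_add,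
    form_smul, zero_add, mul_assoc, Nat.reduceAdd]
  refine form_congr _ fun l hl => ?_
  interval_cases l <;> simp [bil, W884, Nat.choose, -mul_eq_mul_left_iff] <;> ring

lemma tv886 (a b : ℕ → F) : transvectant 8 8 6 (form 8 a) (form 8 b) =
    form 4 (fun l => tc F 8 8 6 * 259200 * bil W886 a b l) := by
  unfold transvectant
  change C (tc F 8 8 6) * _ = _
  generalize tc F 8 8 6 = t
  simp only [Finset.sum_range_succ, Finset.sum_range_zero, Function.iterate_succ,
    Function.iterate_zero, Function.comp, id, Nat.reduceSub, form_pd0, form_pd1, form_mul, form_add,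
    form_smul, zero_add, mul_assoc, Nat.reduceAdd]
  refine form_congr _ fun l hl => ?_
  interval_cases l <;> simp [bil, W886, Nat.choose, -mul_eq_mul_left_iff] <;> ring

lemma tv888 (a b : ℕ → F) : transvectant 8 8 8 (form 8 a) (form 8 b) =
    form 0 (fun l => tc F 8 8 8 * 5806080 * bil W888 a b l) := by
  unfold transvectant
  change C (tc F 8 8 8) * _ = _
  generalize tc F 8 8 8 = t
  simp only [Finset.sum_range_succ, Finset.sum_range_zero, Function.iterate_succ,
    Function.iterate_zero, Function.comp, id, Nat.reduceSub, form_pd0, form_pd1, form_mul, form_add,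
    form_smul, zero_add, mul_assoc, Nat.reduceAdd]
  refine form_congr _ fun l hl => ?_
  interval_cases l <;> simp [bil, W888, Nat.choose, -mul_eq_mul_left_iff] <;> ring

end forms

section Jeq
variable {F : Type*} [Field F]

def ext9 {R : Type*} [CommRing R] (a : Fin 9 → R) : ℕ → R :=
  fun i => if h : i < 9 then a ⟨i, h⟩ else 0

lemma octForm_eq (a : Fin 9 → F) : octForm a = form 8 (ext9 a) := by
  unfold octForm form
  rw [Finset.sum_range]
  refine Finset.sum_congr rfl fun i _ => ?_
  simp [ext9]

lemma bil_smul_left {R : Type*} [CommRing R] (W) (c : R) (a b : ℕ → R) :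
    bil W (fun i => c * a i) b = fun l => c * bil W a b l := by
  funext l
  simp only [bil, ← List.sum_map_mul_left]
  congr 1
  apply List.map_congr_left
  intro t _
  ring

lemma bil_smul_right {R : Type*} [CommRing R] (W) (c : R) (a b : ℕ → R) :
    bil W a (fun i => c * b i) = fun l => c * bil W a b l := by
  funext l
  simp only [bil, ← List.sum_map_mul_left]
  congr 1
  apply List.map_congr_left
  intro t _
  ring

lemma CharOK.two (h : CharOK F) : (2 : F) ≠ 0 := by
  intro h2
  have := (ringChar.spec F 2).1 (by exact_mod_cast h2)
  rcases (Nat.dvd_prime Nat.prime_two).1 this with h1 | h1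
  · have := CharP.cast_eq_zero F (ringChar F); rw [h1] at this; simp at this
  · exact h.1 h1
lemma CharOK.three (h : CharOK F) : (3 : F) ≠ 0 := by
  intro h2
  have := (ringChar.spec F 3).1 (by exact_mod_cast h2)
  rcases (Nat.dvd_prime Nat.prime_three).1 this with h1 | h1
  · have := CharP.cast_eq_zero F (ringChar F); rw [h1] at this; simp at this
  · exact h.2.1 h1
lemma CharOK.five (h : CharOK F) : (5 : F) ≠ 0 := by
  intro h2
  have := (ringChar.spec F 5).1 (by exact_mod_cast h2)
  rcases (Nat.dvd_prime Nat.prime_five).1 this with h1 | h1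
  · have := CharP.cast_eq_zero F (ringChar F); rw [h1] at this; simp at this
  · exact h.2.2.1 h1
lemma CharOK.seven (h : CharOK F) : (7 : F) ≠ 0 := by
  intro h2
  have := (ringChar.spec F 7).1 (by exact_mod_cast h2)
  rcases (Nat.dvd_prime (by norm_num : Nat.Prime 7)).1 this with h1 | h1
  · have := CharP.cast_eq_zero F (ringChar F); rw [h1] at this; simp at this
  · exact h.2.2.2 h1

lemma smooth_ne (h : CharOK F) (a b c d : ℕ) : ((2:F) ^ a * 3 ^ b * 5 ^ c * 7 ^ d) ≠ 0 :=
  mul_ne_zero (mul_ne_zero (mul_ne_zero (pow_ne_zero _ h.two) (pow_ne_zero _ h.three))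
    (pow_ne_zero _ h.five)) (pow_ne_zero _ h.seven)

lemma f4 : ((Nat.factorial 4 : ℕ) : F) = 2 ^ 3 * 3 := by norm_num [Nat.factorial]
lemma f8 : ((Nat.factorial 8 : ℕ) : F) = 2 ^ 7 * 3 ^ 2 * 5 * 7 := by norm_num [Nat.factorial]

lemma covk_eq (a : Fin 9 → F) :
    covk a = form 4 (fun l => tc F 8 8 6 * 259200 * zk (ext9 a) l) := by
  rw [covk, octForm_eq, tv886]; rfl
lemma covg_eq (a : Fin 9 → F) :
    covg a = form 8 (fun l => tc F 8 8 4 * 720 * zg (ext9 a) l) := by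
  rw [covg, octForm_eq, tv884]; rfl

variable (h : CharOK F)
include h
lemma tc442 : tc F 4 4 2 * 6 = 1 / 24 := by
  have hd : (24 : F) ≠ 0 := by
    have := smooth_ne h 3 1 0 0
    norm_num at this; exact this
  have e2 := h.two
  have e3 := h.three
  have e5 := h.five
  have e7 := h.seven
  unfold tc
  rw [div_mul_eq_mul_div, div_eq_div_iff _ hd]
  · norm_num [Nat.factorial]
  · push_cast
    simp only [f4, f8]
    simp [e2, e3, e5, e7]
lemma tc444 : tc F 4 4 4 * 48 = 1 / 12 := by
  have hd : (12 : F) ≠ 0 := by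
    have := smooth_ne h 2 1 0 0
    norm_num at this; exact this
  have e2 := h.two
  have e3 := h.three
  have e5 := h.five
  have e7 := h.seven
  unfold tc
  rw [div_mul_eq_mul_div, div_eq_div_iff _ hd]
  · norm_num [Nat.factorial]
  · push_cast
    simp only [f4, f8]
    simp [e2, e3, e5, e7]
lemma tc844 : tc F 8 4 4 * 144 = 1 / 280 := by
  have hd : (280 : F) ≠ 0 := by
    have := smooth_ne h 3 0 1 1
    norm_num at this; exact this
  have e2 := h.two
  have e3 := h.three
  have e5 := h.five
  have e7 := h.seven
  unfold tc
  rw [div_mul_eq_mul_div, div_eq_div_iff _ hd]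
  · norm_num [Nat.factorial]
  · push_cast
    simp only [f4, f8]
    simp [e2, e3, e5, e7]
lemma tc884 : tc F 8 8 4 * 720 = 1 / 3920 := by
  have hd : (3920 : F) ≠ 0 := by
    have := smooth_ne h 4 0 1 2
    norm_num at this; exact this
  have e2 := h.two
  have e3 := h.three
  have e5 := h.five
  have e7 := h.seven
  unfold tc
  rw [div_mul_eq_mul_div, div_eq_div_iff _ hd]
  · norm_num [Nat.factorial]
  · push_cast
    simp only [f4, f8]
    simp [e2, e3, e5, e7]
lemma tc886 : tc F 8 8 6 * 259200 = 1 / 1568 := by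
  have hd : (1568 : F) ≠ 0 := by
    have := smooth_ne h 5 0 0 2
    norm_num at this; exact this
  have e2 := h.two
  have e3 := h.three
  have e5 := h.five
  have e7 := h.seven
  unfold tc
  rw [div_mul_eq_mul_div, div_eq_div_iff _ hd]
  · norm_num [Nat.factorial]
  · push_cast
    simp only [f4, f8]
    simp [e2, e3, e5, e7]
lemma tc888 : tc F 8 8 8 * 5806080 = 1 / 280 := by
  have hd : (280 : F) ≠ 0 := by
    have := smooth_ne h 3 0 1 1
    norm_num at this; exact this
  have e2 := h.two
  have e3 := h.three
  have e5 := h.five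
  have e7 := h.seven
  unfold tc
  rw [div_mul_eq_mul_div, div_eq_div_iff _ hd]
  · norm_num [Nat.factorial]
  · push_cast
    simp only [f4, f8]
    simp [e2, e3, e5, e7]


lemma covk_eq' (a : Fin 9 → F) : covk a = form 4 (fun l => 1/1568 * zk (ext9 a) l) := by
  rw [covk_eq, tc886 h]
lemma covg_eq' (a : Fin 9 → F) : covg a = form 8 (fun l => 1/3920 * zg (ext9 a) l) := by
  rw [covg_eq, tc884 h]
lemma covh_eq' (a : Fin 9 → F) : covh a =
    form 4 (fun l => 1/24 * (1/1568 * (1/1568 * zh (ext9 a) l))) := by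
  rw [covh, covk_eq' h, tv442, tc442 h, bil_smul_left, bil_smul_right]; rfl
lemma covm_eq' (a : Fin 9 → F) : covm a = form 4 (fun l => 1/280 * (1/1568 * zm (ext9 a) l)) := by
  rw [covm, covk_eq' h, octForm_eq, tv844, tc844 h, bil_smul_right]; rfl
lemma covn_eq' (a : Fin 9 → F) : covn a =
    form 4 (fun l => 1/280 * (1/24 * (1/1568 * (1/1568 * zn (ext9 a) l)))) := by
  rw [covn, covh_eq' h, octForm_eq, tv844, tc844 h]
  simp only [bil_smul_right]
  refine form_congr _ fun l _ => ?_
  simp only [zn]; try ring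
lemma covp_eq' (a : Fin 9 → F) : covp a =
    form 4 (fun l => 1/280 * (1/3920 * (1/1568 * zp (ext9 a) l))) := by
  rw [covp, covg_eq' h, covk_eq' h, tv844, tc844 h]
  simp only [bil_smul_right, bil_smul_left]
  refine form_congr _ fun l _ => ?_
  simp only [zp]; ring
lemma covq_eq' (a : Fin 9 → F) : covq a =
    form 4 (fun l => 1/280 * (1/3920 * (1/24 * (1/1568 * (1/1568 * zq (ext9 a) l))))) := by
  rw [covq, covg_eq' h, covh_eq' h, tv844, tc844 h]
  simp only [bil_smul_right, bil_smul_left]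
  refine form_congr _ fun l _ => ?_
  simp only [zq]; ring
lemma J2_eq (a : Fin 9 → F) : J2 a = 1 / 2 * bil W888 (ext9 a) (ext9 a) 0 := by
  rw [J2, octForm_eq, tv888, form_zero_eq, tc888 h]
  try simp only [bil_smul_right, bil_smul_left]
  have e2 := h.two
  have e3 := h.three
  have e5 := h.five
  have e7 := h.seven
  generalize bil W888 (ext9 a) (ext9 a) 0 = y
  have h1 : (1568 : F) = 2 ^ 5 * 7 ^ 2 := by norm_num
  have h2 : (3920 : F) = 2 ^ 4 * 5 * 7 ^ 2 := by norm_num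
  have h3 : (24 : F) = 2 ^ 3 * 3 := by norm_num
  have h4 : (280 : F) = 2 ^ 3 * 5 * 7 := by norm_num
  have h5 : (12 : F) = 2 ^ 2 * 3 := by norm_num
  simp only [h4]
  field_simp
  try norm_num
lemma J3_eq (a : Fin 9 → F) : J3 a = 1 / 24 * bil W888 (ext9 a) (zg (ext9 a)) 0 := by
  rw [J3, octForm_eq, covg_eq' h, tv888, form_zero_eq, tc888 h]
  try simp only [bil_smul_right, bil_smul_left]
  have e2 := h.two
  have e3 := h.three
  have e5 := h.five
  have e7 := h.seven
  generalize bil W888 (ext9 a) (zg (ext9 a)) 0 = y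
  have h1 : (1568 : F) = 2 ^ 5 * 7 ^ 2 := by norm_num
  have h2 : (3920 : F) = 2 ^ 4 * 5 * 7 ^ 2 := by norm_num
  have h3 : (24 : F) = 2 ^ 3 * 3 := by norm_num
  have h4 : (280 : F) = 2 ^ 3 * 5 * 7 := by norm_num
  have h5 : (12 : F) = 2 ^ 2 * 3 := by norm_num
  have h6 : (24 : F) = 2 ^ 3 * 3 := by norm_num
  simp only [h1, h2, h3, h4, h5, h6]
  field_simp
  try norm_num
lemma J4_eq (a : Fin 9 → F) : J4 a = 1 / 8 * bil W444 (zk (ext9 a)) (zk (ext9 a)) 0 := by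
  rw [J4, covk_eq' h, tv444, form_zero_eq, tc444 h]
  simp only [bil_smul_right, bil_smul_left]
  have e2 := h.two
  have e3 := h.three
  have e5 := h.five
  have e7 := h.seven
  generalize bil W444 (zk (ext9 a)) (zk (ext9 a)) 0 = y
  have h1 : (1568 : F) = 2 ^ 5 * 7 ^ 2 := by norm_num
  have h2 : (3920 : F) = 2 ^ 4 * 5 * 7 ^ 2 := by norm_num
  have h3 : (24 : F) = 2 ^ 3 * 3 := by norm_num
  have h4 : (280 : F) = 2 ^ 3 * 5 * 7 := by norm_num
  have h5 : (12 : F) = 2 ^ 2 * 3 := by norm_num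
  have h6 : (8 : F) = 2 ^ 3 := by norm_num
  simp only [h1, h2, h3, h4, h5, h6]
  field_simp
  try norm_num
lemma J5_eq (a : Fin 9 → F) : J5 a = 1 / 192 * bil W444 (zm (ext9 a)) (zk (ext9 a)) 0 := by
  rw [J5, covm_eq' h, covk_eq' h, tv444, form_zero_eq, tc444 h]
  simp only [bil_smul_right, bil_smul_left]
  have e2 := h.two
  have e3 := h.three
  have e5 := h.five
  have e7 := h.seven
  generalize bil W444 (zm (ext9 a)) (zk (ext9 a)) 0 = y
  have h1 : (1568 : F) = 2 ^ 5 * 7 ^ 2 := by norm_num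
  have h2 : (3920 : F) = 2 ^ 4 * 5 * 7 ^ 2 := by norm_num
  have h3 : (24 : F) = 2 ^ 3 * 3 := by norm_num
  have h4 : (280 : F) = 2 ^ 3 * 5 * 7 := by norm_num
  have h5 : (12 : F) = 2 ^ 2 * 3 := by norm_num
  have h6 : (192 : F) = 2 ^ 6 * 3 := by norm_num
  simp only [h1, h2, h3, h4, h5, h6]
  field_simp
  try norm_num
lemma J6_eq (a : Fin 9 → F) : J6 a = 1 / 64 * bil W444 (zk (ext9 a)) (zh (ext9 a)) 0 := by
  rw [J6, covk_eq' h, covh_eq' h, tv444, form_zero_eq, tc444 h]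
  simp only [bil_smul_right, bil_smul_left]
  have e2 := h.two
  have e3 := h.three
  have e5 := h.five
  have e7 := h.seven
  generalize bil W444 (zk (ext9 a)) (zh (ext9 a)) 0 = y
  have h1 : (1568 : F) = 2 ^ 5 * 7 ^ 2 := by norm_num
  have h2 : (3920 : F) = 2 ^ 4 * 5 * 7 ^ 2 := by norm_num
  have h3 : (24 : F) = 2 ^ 3 * 3 := by norm_num
  have h4 : (280 : F) = 2 ^ 3 * 5 * 7 := by norm_num
  have h5 : (12 : F) = 2 ^ 2 * 3 := by norm_num
  have h6 : (64 : F) = 2 ^ 6 := by norm_num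
  simp only [h1, h2, h3, h4, h5, h6]
  field_simp
  try norm_num
lemma J7_eq (a : Fin 9 → F) : J7 a = 1 / 1536 * bil W444 (zm (ext9 a)) (zh (ext9 a)) 0 := by
  rw [J7, covm_eq' h, covh_eq' h, tv444, form_zero_eq, tc444 h]
  simp only [bil_smul_right, bil_smul_left]
  have e2 := h.two
  have e3 := h.three
  have e5 := h.five
  have e7 := h.seven
  generalize bil W444 (zm (ext9 a)) (zh (ext9 a)) 0 = y
  have h1 : (1568 : F) = 2 ^ 5 * 7 ^ 2 := by norm_num
  have h2 : (3920 : F) = 2 ^ 4 * 5 * 7 ^ 2 := by norm_num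
  have h3 : (24 : F) = 2 ^ 3 * 3 := by norm_num
  have h4 : (280 : F) = 2 ^ 3 * 5 * 7 := by norm_num
  have h5 : (12 : F) = 2 ^ 2 * 3 := by norm_num
  have h6 : (1536 : F) = 2 ^ 9 * 3 := by norm_num
  simp only [h1, h2, h3, h4, h5, h6]
  field_simp
  try norm_num
lemma J8_eq (a : Fin 9 → F) : J8 a = 1 / 3072 * bil W444 (zp (ext9 a)) (zh (ext9 a)) 0 := by
  rw [J8, covp_eq' h, covh_eq' h, tv444, form_zero_eq, tc444 h]
  simp only [bil_smul_right, bil_smul_left]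
  have e2 := h.two
  have e3 := h.three
  have e5 := h.five
  have e7 := h.seven
  generalize bil W444 (zp (ext9 a)) (zh (ext9 a)) 0 = y
  have h1 : (1568 : F) = 2 ^ 5 * 7 ^ 2 := by norm_num
  have h2 : (3920 : F) = 2 ^ 4 * 5 * 7 ^ 2 := by norm_num
  have h3 : (24 : F) = 2 ^ 3 * 3 := by norm_num
  have h4 : (280 : F) = 2 ^ 3 * 5 * 7 := by norm_num
  have h5 : (12 : F) = 2 ^ 2 * 3 := by norm_num
  have h6 : (3072 : F) = 2 ^ 10 * 3 := by norm_num
  simp only [h1, h2, h3, h4, h5, h6]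
  field_simp
  try norm_num
lemma J9_eq (a : Fin 9 → F) : J9 a = 1 / 12288 * bil W444 (zn (ext9 a)) (zh (ext9 a)) 0 := by
  rw [J9, covn_eq' h, covh_eq' h, tv444, form_zero_eq, tc444 h]
  simp only [bil_smul_right, bil_smul_left]
  have e2 := h.two
  have e3 := h.three
  have e5 := h.five
  have e7 := h.seven
  generalize bil W444 (zn (ext9 a)) (zh (ext9 a)) 0 = y
  have h1 : (1568 : F) = 2 ^ 5 * 7 ^ 2 := by norm_num
  have h2 : (3920 : F) = 2 ^ 4 * 5 * 7 ^ 2 := by norm_num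
  have h3 : (24 : F) = 2 ^ 3 * 3 := by norm_num
  have h4 : (280 : F) = 2 ^ 3 * 5 * 7 := by norm_num
  have h5 : (12 : F) = 2 ^ 2 * 3 := by norm_num
  have h6 : (12288 : F) = 2 ^ 12 * 3 := by norm_num
  simp only [h1, h2, h3, h4, h5, h6]
  field_simp
  try norm_num
lemma J10_eq (a : Fin 9 → F) : J10 a = 1 / 24576 * bil W444 (zq (ext9 a)) (zh (ext9 a)) 0 := by
  rw [J10, covq_eq' h, covh_eq' h, tv444, form_zero_eq, tc444 h]
  simp only [bil_smul_right, bil_smul_left]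
  have e2 := h.two
  have e3 := h.three
  have e5 := h.five
  have e7 := h.seven
  generalize bil W444 (zq (ext9 a)) (zh (ext9 a)) 0 = y
  have h1 : (1568 : F) = 2 ^ 5 * 7 ^ 2 := by norm_num
  have h2 : (3920 : F) = 2 ^ 4 * 5 * 7 ^ 2 := by norm_num
  have h3 : (24 : F) = 2 ^ 3 * 3 := by norm_num
  have h4 : (280 : F) = 2 ^ 3 * 5 * 7 := by norm_num
  have h5 : (12 : F) = 2 ^ 2 * 3 := by norm_num
  have h6 : (24576 : F) = 2 ^ 13 * 3 := by norm_num
  simp only [h1, h2, h3, h4, h5, h6]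
  field_simp
  try norm_num

end Jeq

section invar
variable {F : Type*} [Field F]

lemma pd_comm (p : MvPolynomial (Fin 2) F) : pderiv 0 (pderiv 1 p) = pderiv 1 (pderiv 0 p) := by
  have : ⁅(pderiv 0 : Derivation F (MvPolynomial (Fin 2) F) (MvPolynomial (Fin 2) F)), (pderiv 1 : Derivation F (MvPolynomial (Fin 2) F) (MvPolynomial (Fin 2) F))⁆ = 0 := by
    apply MvPolynomial.derivation_ext
    intro i
    fin_cases i <;> simp [Derivation.commutator_apply, pderiv_X, Pi.single_apply]
  have h := congrArg (fun D => D p) this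
  simp only [Derivation.commutator_apply, Derivation.coe_zero, Pi.zero_apply] at h
  exact sub_eq_zero.1 h

def d0 (p : MvPolynomial (Fin 2) F) := pderiv 0 p
def d1 (p : MvPolynomial (Fin 2) F) := pderiv 1 p

lemma d01 : Function.Commute (d0 : MvPolynomial (Fin 2) F → _) d1 := fun p => pd_comm p

/-- the transvectant operator without its constant -/
def DD : ℕ → MvPolynomial (Fin 2) F →ₗ[F] MvPolynomial (Fin 2) F →ₗ[F] MvPolynomial (Fin 2) F
  | 0 => LinearMap.mul F _
  | r + 1 => (DD r).compl₁₂ (pderiv 0).toLinearMap (pderiv 1).toLinearMap -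
      (DD r).compl₁₂ (pderiv 1).toLinearMap (pderiv 0).toLinearMap

lemma DD_succ (r) (f g : MvPolynomial (Fin 2) F) :
    DD (r + 1) f g = DD r (pderiv 0 f) (pderiv 1 g) - DD r (pderiv 1 f) (pderiv 0 g) := by
  simp [DD]

lemma DD_sum (r) (f g : MvPolynomial (Fin 2) F) : DD r f g =
    ∑ ij ∈ Finset.HasAntidiagonal.antidiagonal r, (r.choose ij.1 : MvPolynomial (Fin 2) F) *
      ((-1) ^ ij.1 * (d0^[ij.2] (d1^[ij.1] f) * d0^[ij.1] (d1^[ij.2] g))) := by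
  induction r generalizing f g with
  | zero => simp [DD]
  | succ r ih =>
    rw [DD_succ, ih, ih, Finset.sum_antidiagonal_choose_succ_mul
      (fun i j => (-1) ^ i * (d0^[j] (d1^[i] f) * d0^[i] (d1^[j] g))), sub_eq_add_neg]
    refine congrArg₂ (· + ·) ?_ ?_
    · refine Finset.sum_congr rfl fun ij _ => ?_
      have e1 : d1^[ij.1] (pderiv 0 f) = d0 (d1^[ij.1] f) :=
        ((d01.iterate_right ij.1).eq f).symm
      rw [e1, ← Function.iterate_succ_apply, Function.iterate_succ_apply d1]
      rfl
    · rw [← Finset.sum_neg_distrib]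
      refine Finset.sum_congr rfl fun ij hij => ?_
      have e1 : d1^[ij.2] (pderiv 0 g) = d0 (d1^[ij.2] g) :=
        ((d01.iterate_right ij.2).eq g).symm
      have e2 : r.choose ij.1 = r.choose ij.2 := by
        have := Finset.HasAntidiagonal.mem_antidiagonal.1 hij
        rw [← this]; exact Nat.choose_symm_add
      rw [e1, ← Function.iterate_succ_apply, Function.iterate_succ_apply d1, e2, pow_succ]
      have : d1^[ij.1] (d1 f) = d1^[ij.1] (pderiv 1 f) := rfl
      rw [this]
      ring

lemma transvectant_eq (n m r) (f g : MvPolynomial (Fin 2) F) :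
    transvectant n m r f g = C (tc F n m r) * DD r f g := by
  unfold transvectant
  congr 1
  rw [DD_sum, Finset.Nat.sum_antidiagonal_eq_sum_range_succ_mk]
  refine Finset.sum_congr rfl fun j _ => ?_
  have e : (C ((-1 : F) ^ j * (r.choose j : F)) : MvPolynomial (Fin 2) F) =
    (-1) ^ j * (r.choose j : MvPolynomial (Fin 2) F) := by simp
  rw [e]
  change _ * d0^[r-j] (d1^[j] f) * d0^[j] (d1^[r-j] g) = _
  ring

lemma subst_pd0 (g : Matrix (Fin 2) (Fin 2) F) (p : MvPolynomial (Fin 2) F) :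
    pderiv 0 (substForm g p) =
      C (g 0 0) * substForm g (pderiv 0 p) + C (g 1 0) * substForm g (pderiv 1 p) := by
  unfold substForm
  induction p using MvPolynomial.induction_on with
  | C a => simp
  | add p q hp hq => simp only [map_add, hp, hq]; ring
  | mul_X p i hp =>
    simp only [map_mul, Derivation.leibniz, aeval_X, smul_eq_mul, map_add, hp, pderiv_C]
    fin_cases i <;> simp [pderiv_X, Pi.single_apply] <;> ring

lemma subst_pd1 (g : Matrix (Fin 2) (Fin 2) F) (p : MvPolynomial (Fin 2) F) :
    pderiv 1 (substForm g p) =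
      C (g 0 1) * substForm g (pderiv 0 p) + C (g 1 1) * substForm g (pderiv 1 p) := by
  unfold substForm
  induction p using MvPolynomial.induction_on with
  | C a => simp
  | add p q hp hq => simp only [map_add, hp, hq]; ring
  | mul_X p i hp =>
    simp only [map_mul, Derivation.leibniz, aeval_X, smul_eq_mul, map_add, hp, pderiv_C]
    fin_cases i <;> simp [pderiv_X, Pi.single_apply] <;> ring

lemma DD_subst (g : Matrix (Fin 2) (Fin 2) F) (hg : g 0 0 * g 1 1 - g 0 1 * g 1 0 = 1) (r) (p q) :
    DD r (substForm g p) (substForm g q) = substForm g (DD r p q) := by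
  induction r generalizing p q with
  | zero => simp [DD, substForm]
  | succ r ih =>
    have hC : ∀ (c : F) (x : MvPolynomial (Fin 2) F), C c * x = c • x := fun c x =>
      (smul_eq_C_mul x c).symm
    have e2 : ∀ x y, substForm g (x - y) = substForm g x - substForm g y := fun x y => map_sub _ _ _
    simp only [DD_succ, subst_pd0, subst_pd1, hC, map_add, map_smul, LinearMap.add_apply,
      LinearMap.smul_apply, ih, e2]
    set A := substForm g (DD r (pderiv 0 p) (pderiv 1 q))
    set B := substForm g (DD r (pderiv 1 p) (pderiv 0 q))
    have : A - B = (g 0 0 * g 1 1 - g 0 1 * g 1 0) • (A - B) := by rw [hg, one_smul]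
    rw [this]
    module

lemma tv_subst (g : Matrix (Fin 2) (Fin 2) F) (hg : g 0 0 * g 1 1 - g 0 1 * g 1 0 = 1)
    (n m r) (p q) : transvectant n m r (substForm g p) (substForm g q)
      = substForm g (transvectant n m r p q) := by
  rw [transvectant_eq, transvectant_eq, DD_subst g hg]
  simp [substForm]

lemma cc_subst (g : Matrix (Fin 2) (Fin 2) F) (p) :
    constantCoeff (substForm g p) = constantCoeff p := by
  unfold substForm
  induction p using MvPolynomial.induction_on with
  | C a => simp
  | add p q hp hq => simp only [map_add, hp, hq]
  | mul_X p i hp => simp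

lemma J_subst (g : Matrix (Fin 2) (Fin 2) F) (hg : g 0 0 * g 1 1 - g 0 1 * g 1 0 = 1)
    (a b : Fin 9 → F) (hab : octForm b = substForm g (octForm a)) :
    J2 b = J2 a ∧ J3 b = J3 a ∧ J4 b = J4 a ∧ J5 b = J5 a ∧ J6 b = J6 a ∧ J7 b = J7 a ∧
    J8 b = J8 a ∧ J9 b = J9 a ∧ J10 b = J10 a := by
  have hk : covk b = substForm g (covk a) := by rw [covk, covk, hab, tv_subst g hg]
  have hgg : covg b = substForm g (covg a) := by rw [covg, covg, hab, tv_subst g hg]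
  have hh : covh b = substForm g (covh a) := by rw [covh, covh, hk, tv_subst g hg]
  have hm : covm b = substForm g (covm a) := by rw [covm, covm, hk, hab, tv_subst g hg]
  have hn : covn b = substForm g (covn a) := by rw [covn, covn, hh, hab, tv_subst g hg]
  have hp : covp b = substForm g (covp a) := by rw [covp, covp, hgg, hk, tv_subst g hg]
  have hq : covq b = substForm g (covq a) := by rw [covq, covq, hgg, hh, tv_subst g hg]
  simp only [J2, J3, J4, J5, J6, J7, J8, J9, J10, hab, hk, hgg, hh, hm, hn, hp, hq,
    tv_subst g hg, cc_subst, and_self]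

lemma homog_octForm (p : MvPolynomial (Fin 2) F) (hp : p.IsHomogeneous 8) :
    octForm (fun i : Fin 9 => coeff (Finsupp.single (0 : Fin 2) (i : ℕ) +
      Finsupp.single (1 : Fin 2) (8 - (i : ℕ))) p) = p := by
  have hmon : ∀ (c : F) (i j : ℕ), C c * X 0 ^ i * X 1 ^ j =
      monomial (Finsupp.single (0 : Fin 2) i + Finsupp.single (1 : Fin 2) j) c := by
    intro c i j
    rw [X_pow_eq_monomial, X_pow_eq_monomial, C_mul_monomial, monomial_mul]; simp
  ext m
  unfold octForm
  simp only [hmon, coeff_sum, coeff_monomial]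
  by_cases hm : m 0 + m 1 = 8
  · have hm0 : m 0 < 9 := by lia
    rw [Finset.sum_eq_single (⟨m 0, hm0⟩ : Fin 9)]
    · have : (Finsupp.single (0 : Fin 2) (m 0) + Finsupp.single (1 : Fin 2) (8 - m 0)) = m := by
        ext i; fin_cases i <;> simp <;> lia
      simp only [this, if_true]
    · intro b _ hb
      rw [if_neg]
      intro h
      apply hb
      ext
      have := DFunLike.congr_fun h 0
      simpa using this
    · simp
  · have h0 : coeff m p = 0 := by
      by_contra h
      have := hp h
      rw [Finsupp.weight_apply, Finsupp.sum_fintype _ _ (by simp)] at this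
      simp [Fin.sum_univ_two] at this
      exact hm this
    rw [h0]
    apply Finset.sum_eq_zero
    intro i _
    rw [if_neg]
    intro h
    apply hm
    rw [← h]
    simp
    lia

lemma subst_homog (g : Matrix (Fin 2) (Fin 2) F) (a : Fin 9 → F) :
    (substForm g (octForm a)).IsHomogeneous 8 := by
  unfold substForm octForm
  rw [map_sum]
  apply IsHomogeneous.sum
  intro i _
  simp only [map_mul, map_pow, aeval_X, aeval_C, algebraMap_eq]
  have hl : ∀ j : Fin 2, (C (g j 0) * X 0 + C (g j 1) * X 1 : MvPolynomial (Fin 2) F).IsHomogeneous 1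
      := by
    intro j
    have h1 := fun (c : F) (l : Fin 2) => (isHomogeneous_C (Fin 2) c).mul (isHomogeneous_X F l)
    exact (by simpa using (h1 _ 0).add (h1 _ 1))
  have := ((isHomogeneous_C (Fin 2) (a i)).mul ((hl 0).pow (i:ℕ))).mul ((hl 1).pow (8 - (i:ℕ)))
  have e : 0 + 1 * (i : ℕ) + 1 * (8 - (i:ℕ)) = 8 := by lia
  rwa [e] at this

/-- the dehomogenised values -/
lemma eval_octForm (a : Fin 9 → F) (x y : F) :
    eval ![x, y] (octForm a) = ∑ i : Fin 9, a i * x ^ (i:ℕ) * y ^ (8 - (i:ℕ)) := by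
  simp [octForm]

lemma octAct_form (g : Matrix (Fin 2) (Fin 2) F) (a : Fin 9 → F) :
    octForm (octAct g a) = substForm g (octForm a) := homog_octForm _ (subst_homog g a)

lemma eval_subst (g : Matrix (Fin 2) (Fin 2) F) (p) (x y : F) :
    eval ![x, y] (substForm g p) = eval ![g 0 0 * x + g 0 1 * y, g 1 0 * x + g 1 1 * y] p := by
  unfold substForm
  induction p using MvPolynomial.induction_on with
  | C a => simp
  | add p q hp hq => simp only [map_add, hp, hq]
  | mul_X p i hp =>
    rw [map_mul, map_mul, map_mul, hp]
    congr 1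
    fin_cases i <;> simp

lemma oct0 (b : Fin 9 → F) : b 0 = eval ![0, 1] (octForm b) := by
  rw [eval_octForm, Fin.sum_univ_succ]; simp
lemma oct8 (b : Fin 9 → F) : b 8 = eval ![1, 0] (octForm b) := by
  rw [eval_octForm, Finset.sum_eq_single 8]
  · simp
  · intro i _ hi
    have : 8 - (i : ℕ) ≠ 0 := fun h => hi (by ext; simp; lia)
    simp [this]
  · simp
end invar

section weights
variable {R : Type*} [CommRing R]

def wtd : ℕ → List ℕ → ℕ
  | _, [] => 0
  | n, e :: es => n * e + wtd (n + 1) es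

def scl (w : R) : ℕ → List R → List R
  | _, [] => []
  | n, x :: J => (w ^ n * x) :: scl w (n + 1) J

lemma monZ_scl (w : R) (n : ℕ) (J : List R) (es : List ℕ) (h : es.length ≤ J.length) :
    monZ (scl w n J) es = w ^ wtd n es * monZ J es := by
  induction J generalizing n es with
  | nil =>
    have : es = [] := by simpa using h
    subst this; simp [monZ, scl, wtd]
  | cons x J ih =>
    cases es with
    | nil => simp [monZ, scl, wtd]
    | cons e es =>
      have := ih (n + 1) es (by simpa using h)
      simp only [monZ] at this
      simp only [monZ, scl, wtd, List.zipWith_cons_cons, List.prod_cons, this]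
      ring

lemma relZ_scl (w : R) (D : ℕ) (J : List R) (Rl : List (ℤ × List ℕ)) (hJ : J.length = 9)
    (h : ∀ t ∈ Rl, t.2.length ≤ 9 ∧ wtd 2 t.2 = D) :
    relZ Rl (scl w 2 J) = w ^ D * relZ Rl J := by
  simp only [relZ, ← List.sum_map_mul_left]
  congr 1
  apply List.map_congr_left
  intro t ht
  obtain ⟨h1, h2⟩ := h t ht
  rw [monZ_scl w 2 J t.2 (by rw [hJ]; exact h1), h2]
  ring

def wOK (W : List (List (ℤ × ℕ × ℕ))) (r : ℕ) : Prop :=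
  ∀ l < W.length, ∀ t ∈ W.getD l [], t.2.1 + t.2.2 = l + r
instance (W r) : Decidable (wOK W r) := by unfold wOK; infer_instance

lemma bil_wt {W r} (hW : wOK W r) (c d u : R) (a b : ℕ → R) :
    bil W (fun i => c * u ^ i * a i) (fun i => d * u ^ i * b i) =
      fun l => (c * d * u ^ r) * u ^ l * bil W a b l := by
  funext l
  simp only [bil, ← List.sum_map_mul_left]
  congr 1
  apply List.map_congr_left
  intro t ht
  have hl : l < W.length := by
    by_contra hl
    rw [List.getD_eq_default _ _ (by lia)] at ht
    simp at ht
  have := hW l hl t ht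
  have e : u ^ t.2.1 * u ^ t.2.2 = u ^ r * u ^ l := by rw [← pow_add, this, pow_add, mul_comm]
  linear_combination (c * d * (t.1 : R) * a t.2.1 * b t.2.2) * e

lemma JZ_wt (c u : R) (a : ℕ → R) :
    JZ (fun i => c * u ^ i * a i) = scl (c * u ^ 4) 2 (JZ a) := by
  have w886 : wOK W886 6 := by decide
  have w884 : wOK W884 4 := by decide
  have w888 : wOK W888 8 := by decide
  have w442 : wOK W442 2 := by decide
  have w844 : wOK W844 4 := by decide
  have w444 : wOK W444 4 := by decide
  have hk : zk (fun i => c * u ^ i * a i) = fun l => (c ^ 2 * u ^ 6) * u ^ l * zk a l := by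
    unfold zk; rw [bil_wt w886]; funext l; ring
  have hg : zg (fun i => c * u ^ i * a i) = fun l => (c ^ 2 * u ^ 4) * u ^ l * zg a l := by
    unfold zg; rw [bil_wt w884]; funext l; ring
  have hh : zh (fun i => c * u ^ i * a i) = fun l => (c ^ 4 * u ^ 14) * u ^ l * zh a l := by
    unfold zh; rw [hk, bil_wt w442]; funext l; ring
  have hm : zm (fun i => c * u ^ i * a i) = fun l => (c ^ 3 * u ^ 10) * u ^ l * zm a l := by
    unfold zm; rw [hk, bil_wt w844]; funext l; ring
  have hn : zn (fun i => c * u ^ i * a i) = fun l => (c ^ 5 * u ^ 18) * u ^ l * zn a l := by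
    unfold zn; rw [hh, bil_wt w844]; funext l; ring
  have hp : zp (fun i => c * u ^ i * a i) = fun l => (c ^ 4 * u ^ 14) * u ^ l * zp a l := by
    unfold zp; rw [hk, hg, bil_wt w844]; funext l; ring
  have hq : zq (fun i => c * u ^ i * a i) = fun l => (c ^ 6 * u ^ 22) * u ^ l * zq a l := by
    unfold zq; rw [hh, hg, bil_wt w844]; funext l; ring
  simp only [JZ, hk, hg, hh, hm, hn, hp, hq, bil_wt w444, bil_wt w888, scl]
  congr 1
  · ring
  congr 1
  · ring
  congr 1
  · ring
  congr 1
  · ring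
  congr 1
  · ring
  congr 1
  · ring
  congr 1
  · ring
  congr 1
  · ring
  congr 1
  ring
end weights

section everywhere
variable {F : Type*} [Field F]

lemma density [Infinite F] (Rl : List (ℤ × List ℕ)) (a v : ℕ → F) (S : Finset F)
    (h : ∀ t ∉ S, relZ Rl (JZ (fun i => a i + t * v i)) = 0) : relZ Rl (JZ a) = 0 := by
  let p : Polynomial F := relZ Rl (JZ (fun i => Polynomial.C (a i) + Polynomial.X * Polynomial.C (v i)))
  have he : ∀ t, p.eval t = relZ Rl (JZ (fun i => a i + t * v i)) := by
    intro t
    have := relZ_map (Polynomial.evalRingHom t) Rl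
      (JZ (fun i => Polynomial.C (a i) + Polynomial.X * Polynomial.C (v i)))
    rw [← JZ_map] at this
    simp only [Polynomial.coe_evalRingHom, Polynomial.eval_add, Polynomial.eval_mul,
      Polynomial.eval_X, Polynomial.eval_C] at this
    exact this.symm
  have hp : p = 0 := by
    apply Polynomial.eq_zero_of_infinite_isRoot
    apply (Set.Finite.infinite_compl S.finite_toSet).mono
    intro t ht
    exact (he t).trans (h t ht)
  have := he 0
  rw [hp] at this
  simpa using this.symm

lemma step_a {Rl : List (ℤ × List ℕ)} {D : ℕ} (hS : ∀ x : Fin 5 → F, relZ Rl (JZ (slA x)) = 0)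
    (hw : ∀ t ∈ Rl, t.2.length ≤ 9 ∧ wtd 2 t.2 = D) (a : ℕ → F) (h0 : a 0 = 0)
    (h8 : ∀ i, 8 ≤ i → a i = 0) (h4 : a 4 ≠ 0) (h5 : a 5 ≠ 0) : relZ Rl (JZ a) = 0 := by
  let u := a 4 / a 5
  have hu : u ≠ 0 := div_ne_zero h4 h5
  let c := 1 / (u ^ 4 * a 4)
  have hc : c ≠ 0 := one_div_ne_zero (mul_ne_zero (pow_ne_zero _ hu) h4)
  have h1 := JZ_wt c u a
  have h2 := relZ_scl (c * u ^ 4) D (JZ a) Rl rfl hw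
  rw [← h1] at h2
  have h3 : (fun i => c * u ^ i * a i) = slA ![c * u ^ 1 * a 1, c * u ^ 2 * a 2, c * u ^ 3 * a 3,
      c * u ^ 6 * a 6, c * u ^ 7 * a 7] := by
    funext i
    by_cases hi : 8 ≤ i
    · rw [h8 i hi]
      unfold slA
      rcases hi.eq_or_lt with h | h
      · subst h; simp
      · rw [List.getD_eq_default _ _ (by simp; lia)]; simp
    · have e4 : c * u ^ 4 * a 4 = 1 := by simp only [c]; field_simp
      have e5 : c * u ^ 5 * a 5 = 1 := by
        rw [← e4]; simp only [u]; field_simp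
      interval_cases i <;> simp [slA, h0, e4, e5]
  rw [h3, hS] at h2
  rcases mul_eq_zero.1 h2.symm with h | h
  · exact absurd h (pow_ne_zero _ (mul_ne_zero hc (pow_ne_zero _ hu)))
  · exact h

lemma step_b [Infinite F] {Rl : List (ℤ × List ℕ)} {D : ℕ}
    (hS : ∀ x : Fin 5 → F, relZ Rl (JZ (slA x)) = 0)
    (hw : ∀ t ∈ Rl, t.2.length ≤ 9 ∧ wtd 2 t.2 = D) (a : ℕ → F) (h0 : a 0 = 0)
    (h8 : ∀ i, 8 ≤ i → a i = 0) : relZ Rl (JZ a) = 0 := by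
  classical
  refine density Rl a (fun i => if i = 4 ∨ i = 5 then 1 else 0) {-a 4, -a 5} fun t ht => ?_
  simp only [Finset.mem_insert, Finset.mem_singleton, not_or] at ht
  refine step_a hS hw _ (by simp [h0]) (fun i hi => ?_) ?_ ?_
  · rw [h8 i hi, if_neg (by lia)]; simp
  · intro h; simp at h; exact ht.1 (by linear_combination h)
  · intro h; simp at h; exact ht.2 (by linear_combination h)

lemma JZ_inv (h : CharOK F) (g : Matrix (Fin 2) (Fin 2) F) (hg : g 0 0 * g 1 1 - g 0 1 * g 1 0 = 1)
    (a : Fin 9 → F) : JZ (ext9 (octAct g a)) = JZ (ext9 a) := by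
  obtain ⟨e2, e3, e4, e5, e6, e7, e8, e9, e10⟩ := J_subst g hg a _ (octAct_form g a)
  rw [J2_eq h, J2_eq h] at e2
  rw [J3_eq h, J3_eq h] at e3
  rw [J4_eq h, J4_eq h] at e4
  rw [J5_eq h, J5_eq h] at e5
  rw [J6_eq h, J6_eq h] at e6
  rw [J7_eq h, J7_eq h] at e7
  rw [J8_eq h, J8_eq h] at e8
  rw [J9_eq h, J9_eq h] at e9
  rw [J10_eq h, J10_eq h] at e10
  have nz : ∀ i j : ℕ, (1 / (2 ^ i * 3 ^ j) : F) ≠ 0 := fun i j =>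
    one_div_ne_zero (mul_ne_zero (pow_ne_zero _ h.two) (pow_ne_zero _ h.three))
  have n2 := nz 1 0
  have n3 := nz 3 1
  have n4 := nz 3 0
  have n5 := nz 6 1
  have n6 := nz 6 0
  have n7 := nz 9 1
  have n8 := nz 10 1
  have n9 := nz 12 1
  have n10 := nz 13 1
  norm_num only at n2 n3 n4 n5 n6 n7 n8 n9 n10
  unfold JZ
  rw [mul_left_cancel₀ n2 e2, mul_left_cancel₀ n3 e3, mul_left_cancel₀ n4 e4,
    mul_left_cancel₀ n5 e5, mul_left_cancel₀ n6 e6, mul_left_cancel₀ n7 e7,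
    mul_left_cancel₀ n8 e8, mul_left_cancel₀ n9 e9, mul_left_cancel₀ n10 e10]

lemma ext9_res (a : ℕ → F) (h : ∀ i, 9 ≤ i → a i = 0) : ext9 (fun i : Fin 9 => a i) = a := by
  funext i
  unfold ext9
  split_ifs with hi
  · rfl
  · exact (h i (by lia)).symm

lemma root9 [IsAlgClosed F] (a : Fin 9 → F) (j : Fin 9) (hj : j ≠ 0) (h : a j ≠ 0) :
    ∃ c, ∑ i : Fin 9, a i * c ^ (i : ℕ) = 0 := by
  let p : Polynomial F := ∑ i : Fin 9, Polynomial.C (a i) * Polynomial.X ^ (i : ℕ)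
  have hc : p.coeff j = a j := by
    simp only [p, Polynomial.finsetSum_coeff, Polynomial.coeff_C_mul_X_pow]
    rw [Finset.sum_eq_single j]
    · simp
    · intro b _ hb
      rw [if_neg]
      intro e; exact hb (Fin.ext e.symm)
    · simp
  have hd : p.degree ≠ 0 := by
    intro e
    have : p.coeff j = 0 := by
      apply Polynomial.coeff_eq_zero_of_degree_lt
      rw [e]
      have : 0 < (j : ℕ) := Nat.pos_of_ne_zero fun e => hj (Fin.ext e)
      exact_mod_cast this
    exact h (hc ▸ this)
  obtain ⟨c, hc⟩ := IsAlgClosed.exists_root p hd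
  refine ⟨c, ?_⟩
  simpa [p, Polynomial.IsRoot, Polynomial.eval_finsetSum] using hc

lemma step_c [IsAlgClosed F] (h : CharOK F) {Rl : List (ℤ × List ℕ)} {D : ℕ}
    (hS : ∀ x : Fin 5 → F, relZ Rl (JZ (slA x)) = 0)
    (hw : ∀ t ∈ Rl, t.2.length ≤ 9 ∧ wtd 2 t.2 = D) (a : ℕ → F) (h0 : a 0 = 0)
    (h9 : ∀ i, 9 ≤ i → a i = 0) : relZ Rl (JZ a) = 0 := by
  classical
  have : Infinite F := IsAlgClosed.instInfinite
  refine density Rl a (fun i => if i = 7 then 1 else 0) {-a 7} fun t ht => ?_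
  rw [Finset.mem_singleton] at ht
  set b : ℕ → F := fun i => a i + t * if i = 7 then 1 else 0 with hb
  have hb9 : ∀ i, 9 ≤ i → b i = 0 := fun i hi => by
    simp only [hb]; rw [h9 i hi, if_neg (by lia)]; simp
  have hb7 : b 7 ≠ 0 := by intro h; simp [hb] at h; exact ht (by linear_combination h)
  have hb0 : b 0 = 0 := by simp [hb, h0]
  obtain ⟨d, hd⟩ := root9 (fun i : Fin 9 => b (8 - (i : ℕ))) 1 (by decide) (by simpa using hb7)
  let g : Matrix (Fin 2) (Fin 2) F := !![1, 0; d, 1]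
  rw [← ext9_res b hb9, ← JZ_inv h g (by simp [g])]
  refine step_b hS hw _ ?_ ?_
  · change octAct g _ 0 = 0
    rw [oct0 (octAct g _), octAct_form, eval_subst, eval_octForm, Fin.sum_univ_succ]
    simp [g, hb0]
  · intro i hi
    rcases hi.eq_or_lt with e | e
    · subst e
      change octAct g _ 8 = 0
      rw [oct8 (octAct g _), octAct_form, eval_subst, eval_octForm, ← Equiv.sum_comp Fin.revPerm]
      refine Eq.trans ?_ hd
      refine Finset.sum_congr rfl fun i _ => ?_
      have e1 : ((Fin.revPerm i : Fin 9) : ℕ) = 8 - (i : ℕ) := by simp [Fin.val_rev]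
      rw [e1]
      have e2 : 8 - (8 - (i : ℕ)) = i := by lia
      rw [e2]; simp [g]
    · unfold ext9; rw [dif_neg (by lia)]

lemma step_d [IsAlgClosed F] (h : CharOK F) {Rl : List (ℤ × List ℕ)} {D : ℕ}
    (hS : ∀ x : Fin 5 → F, relZ Rl (JZ (slA x)) = 0)
    (hw : ∀ t ∈ Rl, t.2.length ≤ 9 ∧ wtd 2 t.2 = D) (a : ℕ → F)
    (h9 : ∀ i, 9 ≤ i → a i = 0) : relZ Rl (JZ a) = 0 := by
  classical
  have : Infinite F := IsAlgClosed.instInfinite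
  refine density Rl a (fun i => if i = 8 then 1 else 0) {-a 8} fun t ht => ?_
  rw [Finset.mem_singleton] at ht
  set b : ℕ → F := fun i => a i + t * if i = 8 then 1 else 0 with hb
  have hb9 : ∀ i, 9 ≤ i → b i = 0 := fun i hi => by
    simp only [hb]; rw [h9 i hi, if_neg (by lia)]; simp
  have hb8 : b 8 ≠ 0 := by intro h; simp [hb] at h; exact ht (by linear_combination h)
  obtain ⟨c, hc⟩ := root9 (fun i : Fin 9 => b (i : ℕ)) 8 (by decide) hb8
  let g : Matrix (Fin 2) (Fin 2) F := !![1, c; 0, 1]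
  rw [← ext9_res b hb9, ← JZ_inv h g (by simp [g])]
  refine step_c h hS hw _ ?_ ?_
  · change octAct g _ 0 = 0
    rw [oct0 (octAct g _), octAct_form, eval_subst, eval_octForm]
    refine Eq.trans ?_ hc
    simp [g]
  · intro i hi
    unfold ext9; rw [dif_neg (by lia)]

lemma CharOK.map {E : Type*} [Field E] [Algebra F E] (h : CharOK F) : CharOK E := by
  have : ringChar E = ringChar F := by
    have := charP_of_injective_algebraMap (algebraMap F E).injective (ringChar F)
    exact ringChar.eq E (ringChar F)
  unfold CharOK; rw [this]; exact h

lemma rel_all (h : CharOK F) {Rl : List (ℤ × List ℕ)} {D : ℕ}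
    (hS : ∀ x : Fin 5 → AlgebraicClosure F, relZ Rl (JZ (slA x)) = 0)
    (hw : ∀ t ∈ Rl, t.2.length ≤ 9 ∧ wtd 2 t.2 = D) (a : Fin 9 → F) :
    relZ Rl (JZ (ext9 a)) = 0 := by
  have h1 := step_d (F := AlgebraicClosure F) h.map hS hw
    (fun i => algebraMap F (AlgebraicClosure F) (ext9 a i)) (by
      intro i hi; simp only [ext9]; rw [dif_neg (by lia)]; simp)
  rw [JZ_map, relZ_map] at h1
  exact (map_eq_zero _).1 h1

lemma rel16 (h : CharOK F) (a : Fin 9 → F) : relZ Rel16 (JZ (ext9 a)) = 0 :=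
  rel_all h (D := 16) (fun x => slice16 x) (by decide) a
lemma rel17 (h : CharOK F) (a : Fin 9 → F) : relZ Rel17 (JZ (ext9 a)) = 0 :=
  rel_all h (D := 17) (fun x => slice17 x) (by decide) a
lemma rel18 (h : CharOK F) (a : Fin 9 → F) : relZ Rel18 (JZ (ext9 a)) = 0 :=
  rel_all h (D := 18) (fun x => slice18 x) (by decide) a
lemma rel19 (h : CharOK F) (a : Fin 9 → F) : relZ Rel19 (JZ (ext9 a)) = 0 :=
  rel_all h (D := 19) (fun x => slice19 x) (by decide) a
end everywhere

section expl
/-- the degeneration -/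
def dgA {R : Type*} [CommRing R] (x z0 z1 z2 z3 z4 z5 : R) : ℕ → R := fun i =>
  ([0, z0, 0, z1 * x^2, z2 * x^2, z3 * x^3, z4 * x^2, z5 * x^3, 1] : List R).getD i 0

def dgG2 : List (ℤ × List ℕ) :=
  [(4,[0,0,0,2,0,0,0]), (-10,[1,0,1,0,1,0,0])]
set_option maxHeartbeats 1000000 in
lemma dg2 {R : Type*} [CommRing R] (x z0 z1 z2 z3 z4 z5 : R) :
    bil W888 (dgA x z0 z1 z2 z3 z4 z5) (dgA x z0 z1 z2 z3 z4 z5) 0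
      = x^3 * ((-70) * (z0 * z5) + x * relZ dgG2 [x, z0, z1, z2, z3, z4, z5]) := by
  simp [bil, W888, dgA, dgG2, relZ, monZ]
  ring
def dgG3 : List (ℤ × List ℕ) :=
  [(-4200,[2,1,0,0,1,1,0]), (17640,[2,1,0,1,0,0,1]), (288,[3,0,0,3,0,0,0]),
   (1800,[3,0,2,0,0,1,0]), (-1080,[4,0,1,1,1,0,0])]
set_option maxHeartbeats 1000000 in
lemma dg3 {R : Type*} [CommRing R] (x z0 z1 z2 z3 z4 z5 : R) :
    bil W888 (dgA x z0 z1 z2 z3 z4 z5) (zg (dgA x z0 z1 z2 z3 z4 z5)) 0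
      = x^2 * ((-58800) * (z0 * z1) + x * relZ dgG3 [x, z0, z1, z2, z3, z4, z5]) := by
  simp [bil, zg, W888, W884, dgA, dgG3, relZ, monZ]
  ring
def dgG4 : List (ℤ × List ℕ) :=
  [(37632,[1,1,1,1,0,0,0]), (30240,[3,1,1,0,0,2,0]), (19208,[3,2,0,0,0,0,2]),
   (-30912,[4,1,0,1,1,1,0]), (6272,[4,1,0,2,0,0,1]), (512,[5,0,0,4,0,0,0]),
   (-4032,[5,0,2,1,0,1,0]), (29008,[5,1,1,0,1,0,1]), (-2560,[6,0,1,2,1,0,0]),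
   (10080,[6,0,3,0,0,0,1]), (10080,[6,1,0,0,3,0,0]), (4712,[7,0,2,0,2,0,0])]
set_option maxHeartbeats 1000000 in
lemma dg4 {R : Type*} [CommRing R] (x z0 z1 z2 z3 z4 z5 : R) :
    bil W444 (zk (dgA x z0 z1 z2 z3 z4 z5)) (zk (dgA x z0 z1 z2 z3 z4 z5)) 0
      = x^2 * ((658560) * (z0^2 * z4) + x * relZ dgG4 [x, z0, z1, z2, z3, z4, z5]) := by
  simp [bil, zk, W886, W444, dgA, dgG4, relZ, monZ]
  ring
def dgG5 : List (ℤ × List ℕ) :=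
  [(36879360,[0,2,1,0,0,0,1]), (903168,[1,1,1,2,0,0,0]), (2352000,[1,2,0,0,0,3,0]),
   (16464000,[1,2,0,0,2,0,0]), (564480,[2,1,2,0,1,0,0]), (336000,[3,0,4,0,0,0,0]),
   (-537600,[3,1,1,1,0,2,0]), (-5597760,[3,2,0,0,1,1,1]), (460992,[3,2,0,1,0,0,2]),
   (64512,[4,1,0,2,1,1,0]), (150528,[4,1,0,3,0,0,1]), (47040,[4,1,2,0,0,1,1]),
   (12288,[5,0,0,5,0,0,0]), (87552,[5,0,2,2,0,1,0]), (544320,[5,1,1,0,2,1,0]),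
   (-903168,[5,1,1,1,1,0,1]), (-76800,[6,0,1,3,1,0,0]), (-185280,[6,0,3,0,1,1,0]),
   (-67200,[6,0,3,1,0,0,1]), (-67200,[6,1,0,1,3,0,0]), (111168,[7,0,2,1,2,0,0])]
set_option maxHeartbeats 1000000 in
lemma dg5 {R : Type*} [CommRing R] (x z0 z1 z2 z3 z4 z5 : R) :
    bil W444 (zm (dgA x z0 z1 z2 z3 z4 z5)) (zk (dgA x z0 z1 z2 z3 z4 z5)) 0
      = x^4 * ((-26342400) * (z0^2 * z2 * z4) + x * relZ dgG5 [x, z0, z1, z2, z3, z4, z5]) := by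
  simp [bil, zk, zm, W886, W844, W444, dgA, dgG5, relZ, monZ]
  ring
def dgG6 : List (ℤ × List ℕ) :=
  [(663828480,[0,2,2,0,0,0,0]), (387233280,[1,3,0,0,0,1,1]), (63221760,[2,2,0,2,0,1,0]),
   (121701888,[3,2,1,0,1,1,0]), (22127616,[3,2,1,1,0,0,1]), (3612672,[4,1,1,3,0,0,0]),
   (60963840,[4,1,3,0,0,1,0]), (-50803200,[4,2,0,1,0,3,0]), (-56899584,[4,2,0,1,2,0,0]),
   (-21224448,[5,1,2,1,1,0,0]), (106686720,[5,2,1,0,0,2,1]), (7529536,[5,3,0,0,0,0,3]),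
   (-2903040,[6,1,1,2,0,2,0]), (21168000,[6,2,0,0,2,2,0]), (24498432,[6,2,0,1,1,1,1]),
   (3687936,[6,2,0,2,0,0,2]), (3999744,[7,1,0,3,1,1,0]), (602112,[7,1,0,4,0,0,1]),
   (-290304,[7,1,2,0,1,2,0]), (17950464,[7,1,2,1,0,1,1]), (-57624000,[7,2,1,0,1,0,2]),
   (32768,[8,0,0,6,0,0,0]), (1105920,[8,0,2,3,0,1,0]), (1399680,[8,0,4,0,0,2,0]),
   (-8692992,[8,1,1,1,2,1,0]), (-10913280,[8,1,1,2,1,0,1]), (-11854080,[8,1,3,0,0,0,2]),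
   (-11854080,[8,2,0,0,3,0,1]), (-245760,[9,0,1,4,1,0,0]), (-3324672,[9,0,3,1,1,1,0]),
   (-1645056,[9,0,3,2,0,0,1]), (-1645056,[9,1,0,2,3,0,0]), (17169600,[9,1,2,0,2,0,1]),
   (199680,[10,0,2,2,2,0,0]), (4112640,[10,0,4,0,1,0,1]), (4112640,[10,1,1,0,4,0,0]),
   (664768,[11,0,3,0,3,0,0])]
set_option maxHeartbeats 1000000 in
lemma dg6 {R : Type*} [CommRing R] (x z0 z1 z2 z3 z4 z5 : R) :
    bil W444 (zk (dgA x z0 z1 z2 z3 z4 z5)) (zh (dgA x z0 z1 z2 z3 z4 z5)) 0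
      = x^3 * ((2788079616) * (z0^3 * z3) + x * relZ dgG6 [x, z0, z1, z2, z3, z4, z5]) := by
  simp [bil, zk, zh, W886, W442, W444, dgA, dgG6, relZ, monZ]
  ring
def dgG7 : List (ℤ × List ℕ) :=
  [(99131719680,[3,3,1,0,0,1,0]), (-44609273856,[4,3,0,1,1,0,0]), (-5310627840,[5,2,2,1,0,0,0]),
   (22127616000,[6,3,0,0,1,2,0]), (2065244160,[6,3,0,1,0,1,1]), (337182720,[7,2,0,3,0,1,0]),
   (11190251520,[7,2,2,0,0,2,0]), (-1807088640,[7,3,1,0,0,0,2]), (-134873088,[8,2,1,1,1,1,0]),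
   (236027904,[8,2,1,2,0,0,1]), (-1843968000,[8,3,0,0,0,3,1]), (-25299240960,[8,3,0,0,2,0,1]),
   (86704128,[9,1,1,4,0,0,0]), (776724480,[9,1,3,1,0,1,0]), (1550438400,[9,2,0,2,0,3,0]),
   (-1133776896,[9,2,0,2,2,0,0]), (-16743229440,[9,2,2,0,1,0,1]), (-834527232,[10,1,2,2,1,0,0]),
   (-2476185600,[10,1,4,0,0,0,1]), (75264000,[10,2,1,0,1,3,0]), (2518333440,[10,2,1,0,3,0,0]),
   (-4541429760,[10,2,1,1,0,2,1]), (129077760,[10,3,0,0,1,1,2]), (180708864,[10,3,0,1,0,0,3]),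
   (-36556800,[11,0,4,2,0,0,0]), (55910400,[11,1,1,3,0,2,0]), (272885760,[11,1,3,0,0,3,0]),
   (1311851520,[11,1,3,0,2,0,0]), (-1381847040,[11,2,0,1,2,2,0]), (166483968,[11,2,0,2,1,1,1]),
   (88510464,[11,2,0,3,0,0,2]), (3558858240,[11,2,2,0,0,1,2]), (91392000,[12,0,5,0,1,0,0]),
   (23740416,[12,1,0,4,1,1,0]), (14450688,[12,1,0,5,0,0,1]), (102918144,[12,1,2,1,1,2,0]),
   (-53889024,[12,1,2,2,0,1,1]), (1353999360,[12,2,1,0,2,1,1]), (-682268160,[12,2,1,1,1,0,2]),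
   (786432,[13,0,0,7,0,0,0]), (11796480,[13,0,2,4,0,1,0]), (50319360,[13,0,4,1,0,2,0]),
   (-118315008,[13,1,1,2,2,1,0]), (-153538560,[13,1,1,3,1,0,1]), (-1000258560,[13,1,3,0,1,1,1]),
   (84295680,[13,1,3,1,0,0,2]), (293529600,[13,2,0,0,4,1,0]), (84295680,[13,2,0,1,3,0,1]),
   (-6881280,[14,0,1,5,1,0,0]), (-52574208,[14,0,3,2,1,1,0]), (-12816384,[14,0,3,3,0,0,1]),
   (-125798400,[14,0,5,0,0,1,1]), (-12816384,[14,1,0,3,3,0,0]), (-127249920,[14,1,2,0,3,1,0]),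
   (515934720,[14,1,2,1,2,0,1]), (17080320,[15,0,2,3,2,0,0]), (13678080,[15,0,4,0,2,1,0]),
   (57200640,[15,0,4,1,1,0,1]), (57200640,[15,1,1,1,4,0,0]), (-8206848,[16,0,3,1,3,0,0])]
set_option maxHeartbeats 1000000 in
lemma dg7 {R : Type*} [CommRing R] (x z0 z1 z2 z3 z4 z5 : R) :
    bil W444 (zm (dgA x z0 z1 z2 z3 z4 z5)) (zh (dgA x z0 z1 z2 z3 z4 z5)) 0
      = x^0 * ((607181783040) * (z0^4) + x * relZ dgG7 [x, z0, z1, z2, z3, z4, z5]) := by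
  simp [bil, zk, zm, zh, W886, W442, W844, W444, dgA, dgG7, relZ, monZ]
  ring
end expl

section indep
variable {K : Type*} [Field K]

lemma map_prod_mon {σ ι : Type*} [Fintype ι] (c : ι → K) (m : ι → σ →₀ ℕ) :
    monomial (∑ i, m i) (∏ i, c i) = ∏ i, monomial (m i) (c i) := by
  classical
  have : ∀ s : Finset ι, monomial (∑ i ∈ s, m i) (∏ i ∈ s, c i) = ∏ i ∈ s, monomial (m i) (c i) := by
    intro s
    induction s using Finset.induction_on with
    | empty => simp
    | insert a s ha ih =>
      rw [Finset.sum_insert ha, Finset.prod_insert ha, Finset.prod_insert ha, ← ih, monomial_mul]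
  exact this _

lemma mon_indep {σ ι : Type*} [Fintype ι] (c : ι → K) (hc : ∀ i, c i ≠ 0) (m : ι → σ →₀ ℕ)
    (hm : Function.Injective fun s : ι →₀ ℕ => ∑ i, s i • m i) :
    AlgebraicIndependent K fun i => monomial (m i) (c i) := by
  classical
  rw [algebraicIndependent_iff]
  intro p hp
  by_contra hne
  obtain ⟨s, hs⟩ := MvPolynomial.ne_zero_iff.1 hne
  have e : aeval (fun i => monomial (m i) (c i)) p = ∑ t ∈ p.support,
      monomial (∑ i, t i • m i) (coeff t p * ∏ i, c i ^ t i) := by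
    rw [aeval_def, eval₂_eq']
    refine Finset.sum_congr rfl fun t _ => ?_
    have : ∏ i, (monomial (m i) (c i)) ^ t i = monomial (∑ i, t i • m i) (∏ i, c i ^ t i) := by
      simp only [monomial_pow]
      exact (map_prod_mon _ _).symm
    rw [this, algebraMap_eq, C_mul_monomial]
  rw [e] at hp
  have := congrArg (coeff (∑ i, s i • m i)) hp
  rw [coeff_sum, Finset.sum_eq_single s] at this
  · rw [coeff_monomial, if_pos rfl, coeff_zero] at this
    exact (mul_ne_zero hs (Finset.prod_ne_zero_iff.2 fun i _ => pow_ne_zero _ (hc i))) this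
  · intro t _ ht
    rw [coeff_monomial, if_neg]
    exact fun h => ht (hm h)
  · intro h; exact absurd (mem_support_iff.2 hs) h

lemma lead_indep {ι B : Type*} [Fintype ι] [CommRing B] [Algebra K B] (r : ι → B)
    (hr : AlgebraicIndependent K r) (d : ι → ℕ) (G : ι → Polynomial B) :
    AlgebraicIndependent K fun i =>
      Polynomial.X ^ d i * (Polynomial.C (r i) + Polynomial.X * G i) := by
  classical
  rw [algebraicIndependent_iff]
  intro p hp
  by_contra hne
  have hs : p.support.Nonempty := by rwa [Finset.nonempty_iff_ne_empty, Ne, support_eq_empty]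
  let w : (ι →₀ ℕ) → ℕ := fun m => ∑ i, d i * m i
  obtain ⟨m0, hm0, hmin⟩ := Finset.exists_min_image p.support w hs
  let q : MvPolynomial ι K := ∑ t ∈ p.support with w t = w m0, monomial t (coeff t p)
  have hq : q ≠ 0 := by
    rw [MvPolynomial.ne_zero_iff]
    refine ⟨m0, ?_⟩
    simp only [q, coeff_sum, coeff_monomial]
    rw [Finset.sum_ite_eq', if_pos]
    · exact mem_support_iff.1 hm0
    · simp only [Finset.mem_filter]; exact ⟨hm0, trivial⟩
  apply hq
  rw [algebraicIndependent_iff] at hr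
  apply hr
  have := congrArg (fun P => Polynomial.coeff P (w m0)) hp
  simp only [Polynomial.coeff_zero] at this
  rw [← this, aeval_def (p := p), eval₂_eq', Polynomial.finsetSum_coeff]
  simp only [q, map_sum, aeval_monomial]
  rw [Finset.sum_filter]
  refine Finset.sum_congr rfl fun t ht => ?_
  have e : ∏ i, (Polynomial.X ^ d i * (Polynomial.C (r i) + Polynomial.X * G i)) ^ t i =
      Polynomial.X ^ w t * ∏ i, (Polynomial.C (r i) + Polynomial.X * G i) ^ t i := by
    simp only [mul_pow, Finset.prod_mul_distrib, ← pow_mul, Finset.prod_pow_eq_pow_sum, w]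
  rw [e, IsScalarTower.algebraMap_apply K B (Polynomial B), ← Polynomial.C_eq_algebraMap,
    Polynomial.coeff_C_mul]
  split_ifs with h
  · rw [← h]
    have := Polynomial.coeff_X_pow_mul (∏ i, (Polynomial.C (r i) + Polynomial.X * G i) ^ t i) (w t) 0
    rw [zero_add] at this
    rw [this, Polynomial.coeff_zero_eq_eval_zero, Polynomial.eval_prod]
    simp [Finsupp.prod_fintype]
  · have hlt : w m0 < w t := lt_of_le_of_ne (hmin t ht) (Ne.symm h)
    rw [Polynomial.coeff_X_pow_mul', if_neg (by lia), mul_zero]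

/-- exponents -/
def gam : Fin 6 → ℕ := ![2, 24, 8, 192, 64, 1536]
def ledc : Fin 6 → ℤ := ![-70, -58800, 658560, -26342400, 2788079616, 607181783040]
def ledm : Fin 6 → Fin 6 → ℕ := ![![1,0,0,0,0,1], ![1,1,0,0,0,0], ![2,0,0,0,1,0],
  ![2,0,1,0,1,0], ![3,0,0,1,0,0], ![4,0,0,0,0,0]]
def ledd : Fin 6 → ℕ := ![3, 2, 2, 4, 3, 0]
def ledG : Fin 6 → List (ℤ × List ℕ) := ![dgG2, dgG3, dgG4, dgG5, dgG6, dgG7]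

lemma dg_all {R : Type*} [CommRing R] (x : R) (z : Fin 6 → R) (i : Fin 6) :
    (JZ (dgA x (z 0) (z 1) (z 2) (z 3) (z 4) (z 5))).getD i 0 =
      x ^ ledd i * ((ledc i : R) * (∏ j, z j ^ ledm i j) +
        x * relZ (ledG i) [x, z 0, z 1, z 2, z 3, z 4, z 5]) := by
  fin_cases i
  · refine (dg2 _ _ _ _ _ _ _).trans ?_
    simp [ledd, ledc, ledm, ledG, Fin.prod_univ_six]
  · refine (dg3 _ _ _ _ _ _ _).trans ?_
    simp [ledd, ledc, ledm, ledG, Fin.prod_univ_six]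
  · refine (dg4 _ _ _ _ _ _ _).trans ?_
    simp [ledd, ledc, ledm, ledG, Fin.prod_univ_six]
  · refine (dg5 _ _ _ _ _ _ _).trans ?_
    simp [ledd, ledc, ledm, ledG, Fin.prod_univ_six]
  · refine (dg6 _ _ _ _ _ _ _).trans ?_
    simp [ledd, ledc, ledm, ledG, Fin.prod_univ_six]
  · refine (dg7 _ _ _ _ _ _ _).trans ?_
    simp [ledd, ledc, ledm, ledG, Fin.prod_univ_six]

lemma getD_JZ_map {R S : Type*} [CommRing R] [CommRing S] (f : R →+* S) (a : ℕ → R) (i : ℕ) :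
    (JZ (fun j => f (a j))).getD i 0 = f ((JZ a).getD i 0) := by
  rw [JZ_map]
  have := List.getD_map (f := f) (l := JZ a) (n := i) (d := 0)
  rwa [map_zero] at this

lemma ext9_map {R S : Type*} [CommRing R] [CommRing S] (f : R →+* S) (a : Fin 9 → R) :
    ext9 (fun i => f (a i)) = fun i => f (ext9 a i) := by
  funext i; unfold ext9; split_ifs <;> simp

lemma ext9_resR {R : Type*} [CommRing R] (a : ℕ → R) (h : ∀ i, 9 ≤ i → a i = 0) :
    ext9 (fun i : Fin 9 => a i) = a := by
  funext i
  unfold ext9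
  split_ifs with hi
  · rfl
  · exact (h i (by lia)).symm

lemma ledinj : Function.Injective fun s : Fin 6 →₀ ℕ =>
    ∑ i, s i • (Finsupp.equivFunOnFinite.symm (ledm i) : Fin 6 →₀ ℕ) := by
  intro s t h
  have h' : ∀ j, ∑ i, s i * ledm i j = ∑ i, t i * ledm i j := by
    intro j
    have := DFunLike.congr_fun h j
    simpa [Finsupp.finsetSum_apply] using this
  have h0 := h' 0
  have h1 := h' 1
  have h2 := h' 2
  have h3 := h' 3
  have h4 := h' 4
  have h5 := h' 5
  simp [Fin.sum_univ_six, ledm] at h0 h1 h2 h3 h4 h5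
  ext i
  fin_cases i <;> simp <;> lia

/-- the six invariants, as polynomials -/
def Jpol (K : Type*) [Field K] (i : Fin 6) : MvPolynomial (Fin 9) K :=
  C (1 / (gam i : K)) * (JZ (ext9 X)).getD i 0

lemma gam_ne (h : CharOK K) (i : Fin 6) : (gam i : K) ≠ 0 := by
  have a := fun i j => smooth_ne h i j 0 0
  fin_cases i
  · have := a 1 0; norm_num at this; simpa [gam] using this
  · have := a 3 1; norm_num at this; simpa [gam] using this
  · have := a 3 0; norm_num at this; simpa [gam] using this
  · have := a 6 1; norm_num at this; simpa [gam] using this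
  · have := a 6 0; norm_num at this; simpa [gam] using this
  · have := a 9 1; norm_num at this; simpa [gam] using this

lemma ledc_ne (h : CharOK K) (i : Fin 6) : (ledc i : K) ≠ 0 := by
  have a := smooth_ne h
  fin_cases i
  · have := a 1 0 1 1; norm_num at this; simpa [ledc] using this
  · have := a 4 1 2 2; norm_num at this; simpa [ledc] using this
  · have := a 7 1 1 3; norm_num at this; simpa [ledc] using this
  · have := a 10 1 2 3; norm_num at this; simpa [ledc] using this
  · have := a 11 4 0 5; norm_num at this; simpa [ledc] using this
  · have := a 14 2 1 7; norm_num at this; simpa [ledc] using this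

lemma Jpol_indep (h : CharOK K) : AlgebraicIndependent K (Jpol K) := by
  let xx : Polynomial (MvPolynomial (Fin 6) K) := Polynomial.X
  let z : Fin 6 → Polynomial (MvPolynomial (Fin 6) K) := fun i => Polynomial.C (X i)
  let A : ℕ → Polynomial (MvPolynomial (Fin 6) K) := dgA xx (z 0) (z 1) (z 2) (z 3) (z 4) (z 5)
  let φ : MvPolynomial (Fin 9) K →ₐ[K] Polynomial (MvPolynomial (Fin 6) K) :=
    aeval fun i : Fin 9 => A i
  have h1 := mon_indep (fun i => 1 / (gam i : K) * ledc i)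
    (fun i => mul_ne_zero (one_div_ne_zero (gam_ne h i)) (ledc_ne h i))
    (fun i => Finsupp.equivFunOnFinite.symm (ledm i)) ledinj
  have h2 := lead_indep _ h1 ledd (fun i => Polynomial.C (C (1 / (gam i : K))) *
    relZ (ledG i) [xx, z 0, z 1, z 2, z 3, z 4, z 5])
  apply AlgebraicIndependent.of_comp φ
  convert h2 using 1
  funext i
  have hA : (fun i => φ (ext9 X i)) = A := by
    have e0 := ext9_map φ.toRingHom X
    simp only [AlgHom.toRingHom_eq_coe, RingHom.coe_coe] at e0
    rw [← e0]
    simp only [φ, aeval_X]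
    apply ext9_resR
    intro i hi
    simp only [A, dgA]
    rw [List.getD_eq_default]
    simpa using hi
  have e1 := getD_JZ_map φ.toRingHom (ext9 X) i
  simp only [AlgHom.toRingHom_eq_coe, RingHom.coe_coe, hA] at e1
  simp only [Function.comp, Jpol, map_mul, ← e1]
  rw [dg_all]
  have e2 : φ (C (1 / (gam i : K))) = Polynomial.C (C (1 / (gam i : K))) := by
    simp only [φ, aeval_C]; rfl
  have e3 : (monomial (Finsupp.equivFunOnFinite.symm (ledm i)) (1 / (gam i : K) * (ledc i : K)) :
      MvPolynomial (Fin 6) K) = C (1 / (gam i : K)) * (ledc i : MvPolynomial (Fin 6) K) *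
        ∏ j, X j ^ ledm i j := by
    rw [monomial_eq, Finsupp.prod_fintype _ _ (by simp)]
    simp
  rw [e2, e3]
  simp only [z, map_mul, map_prod, map_pow, map_intCast, xx]
  ring
end indep

section fields
variable {K E : Type*} [Field K] [Field E] [Algebra K E]

lemma swap_indep {n : ℕ} (x y : Fin n → E) (hx : AlgebraicIndependent K x)
    (h : ∀ i, x i ∈ IntermediateField.adjoin K (Set.range y)) : AlgebraicIndependent K y := by
  let M := IntermediateField.adjoin K (Set.range y)
  let y' : Fin n → M := fun i => ⟨y i, IntermediateField.subset_adjoin _ _ ⟨i, rfl⟩⟩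
  let x' : Fin n → M := fun i => ⟨x i, h i⟩
  have hx' : AlgebraicIndependent K x' := AlgebraicIndependent.of_comp M.val hx
  have halg : Algebra.IsAlgebraic (Algebra.adjoin K (Set.range y')) M := by
    constructor
    intro m
    obtain ⟨r, s, hrs⟩ := (IntermediateField.mem_adjoin_range_iff K y (m : E)).1 m.2
    have hm : m = aeval y' r / aeval y' s := by
      apply Subtype.ext
      rw [hrs]
      have e : ∀ p : MvPolynomial (Fin n) K, ((aeval y' p : M) : E) = aeval y p := by
        intro p
        change M.val (aeval y' p) = _
        rw [MvPolynomial.comp_aeval_apply]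
        rfl
      rw [← e, ← e]; rfl
    have hal : ∀ p : MvPolynomial (Fin n) K, IsAlgebraic (Algebra.adjoin K (Set.range y')) (aeval y' p) := by
      intro p
      have : aeval y' p ∈ Algebra.adjoin K (Set.range y') := by
        rw [Algebra.adjoin_range_eq_range_aeval]; exact ⟨p, rfl⟩
      exact isAlgebraic_algebraMap (⟨_, this⟩ : Algebra.adjoin K (Set.range y'))
    rw [hm, div_eq_mul_inv]
    exact (hal r).mul (hal s).inv
  have hb := Algebra.IsAlgebraic.isTranscendenceBasis_of_lift_le_trdeg_of_finite K y'
    (hx'.lift_cardinalMk_le_trdeg)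
  exact hb.1.map' (f := M.val) Subtype.val_injective

lemma zz_indep (h12 : (12 : K) ≠ 0) (Z : Fin 6 → E) (hZ : AlgebraicIndependent K Z) (θ : E)
    (hθ : θ = Z 1 / (12 * Z 0)) :
    AlgebraicIndependent K ![Z 0 / θ ^ 2, Z 2 / θ ^ 4, Z 3 / θ ^ 5, Z 4 / θ ^ 6, Z 5 / θ ^ 7] := by
  have h12' : (12 : E) ≠ 0 := by
    have := (map_ne_zero (algebraMap K E)).2 h12; rwa [map_ofNat] at this
  have n0 := hZ.ne_zero 0
  have n1 := hZ.ne_zero 1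
  have nθ : θ ≠ 0 := by rw [hθ]; exact div_ne_zero n1 (mul_ne_zero h12' n0)
  let y : Fin 6 → E := ![Z 0 / θ ^ 2, Z 2 / θ ^ 4, Z 3 / θ ^ 5, Z 4 / θ ^ 6, Z 5 / θ ^ 7, θ]
  have hy : AlgebraicIndependent K y := by
    refine swap_indep Z y hZ ?_
    have hm : ∀ i, y i ∈ IntermediateField.adjoin K (Set.range y) :=
      fun i => IntermediateField.subset_adjoin _ _ ⟨i, rfl⟩
    have hc : (12 : E) ∈ IntermediateField.adjoin K (Set.range y) := ofNat_mem _ 12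
    have m0 := hm 0
    have m1 := hm 1
    have m2 := hm 2
    have m3 := hm 3
    have m4 := hm 4
    have m5 := hm 5
    simp only [y, Matrix.cons_val] at m0 m1 m2 m3 m4 m5
    have key : ∀ (a : E) (n : ℕ), a / θ ^ n ∈ IntermediateField.adjoin K (Set.range y) →
        a ∈ IntermediateField.adjoin K (Set.range y) := by
      intro a n ha
      have := mul_mem ha (pow_mem m5 n)
      rwa [div_mul_cancel₀ _ (pow_ne_zero _ nθ)] at this
    have z0 := key _ _ m0
    intro i
    fin_cases i
    · exact z0
    · have : Z 1 = θ * (12 * Z 0) := by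
        rw [hθ, div_mul_cancel₀ _ (mul_ne_zero h12' n0)]
      change Z 1 ∈ _
      rw [this]
      exact mul_mem m5 (mul_mem hc z0)
    · exact key _ _ m1
    · exact key _ _ m2
    · exact key _ _ m3
    · exact key _ _ m4
  have := hy.comp (Fin.castSucc : Fin 5 → Fin 6) (Fin.castSucc_injective _)
  convert this using 1
  funext i
  fin_cases i <;> rfl

lemma tt_adjoin (h2 : (2 : K) ≠ 0) (h3 : (3 : K) ≠ 0) (z t : Fin 5 → E)
    (hz : ∀ i, z i ≠ 0) (t0 : t 0 = 2 / z 0)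
    (t1 : t 1 = z 1 / (2 * z 0 ^ 2)) (t2 : t 2 = z 2 / (48 * z 0 ^ 2))
    (t3 : t 3 = z 3 / (4 * z 0 * z 1)) (t4 : t 4 = z 4 / (4 * z 0 * z 2)) :
    IntermediateField.adjoin K (Set.range t) = IntermediateField.adjoin K (Set.range z) := by
  have h2' : (2 : E) ≠ 0 := by
    have := (map_ne_zero (algebraMap K E)).2 h2; rwa [map_ofNat] at this
  have h3' : (3 : E) ≠ 0 := by
    have := (map_ne_zero (algebraMap K E)).2 h3; rwa [map_ofNat] at this
  have h4 : (4 : E) ≠ 0 := by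
    have := pow_ne_zero 2 h2'; norm_num at this; exact this
  have h48 : (48 : E) ≠ 0 := by
    have := mul_ne_zero (pow_ne_zero 4 h2') h3'; norm_num at this; exact this
  have z0 := hz 0
  have z1 := hz 1
  have z2 := hz 2
  have ht0 : t 0 ≠ 0 := by rw [t0]; exact div_ne_zero h2' z0
  apply le_antisymm
  · rw [IntermediateField.adjoin_le_iff]
    rintro _ ⟨i, rfl⟩
    have hm : ∀ i, z i ∈ IntermediateField.adjoin K (Set.range z) :=
      fun i => IntermediateField.subset_adjoin _ _ ⟨i, rfl⟩
    change t i ∈ IntermediateField.adjoin K (Set.range z)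
    fin_cases i
    · change t 0 ∈ _
      rw [t0]; exact div_mem (ofNat_mem _ 2) (hm 0)
    · change t 1 ∈ _
      rw [t1]; exact div_mem (hm 1) (mul_mem (ofNat_mem _ 2) (pow_mem (hm 0) 2))
    · change t 2 ∈ _
      rw [t2]; exact div_mem (hm 2) (mul_mem (ofNat_mem _ 48) (pow_mem (hm 0) 2))
    · change t 3 ∈ _
      rw [t3]; exact div_mem (hm 3) (mul_mem (mul_mem (ofNat_mem _ 4) (hm 0)) (hm 1))
    · change t 4 ∈ _
      rw [t4]; exact div_mem (hm 4) (mul_mem (mul_mem (ofNat_mem _ 4) (hm 0)) (hm 2))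
  · rw [IntermediateField.adjoin_le_iff]
    rintro _ ⟨i, rfl⟩
    have hm : ∀ i, t i ∈ IntermediateField.adjoin K (Set.range t) :=
      fun i => IntermediateField.subset_adjoin _ _ ⟨i, rfl⟩
    change z i ∈ IntermediateField.adjoin K (Set.range t)
    have m0 : z 0 ∈ IntermediateField.adjoin K (Set.range t) := by
      have : z 0 = 2 / t 0 := by rw [t0]; field_simp
      rw [this]; exact div_mem (ofNat_mem _ 2) (hm 0)
    have m1 : z 1 ∈ IntermediateField.adjoin K (Set.range t) := by
      have : z 1 = 2 * z 0 ^ 2 * t 1 := by rw [t1]; field_simp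
      rw [this]; exact mul_mem (mul_mem (ofNat_mem _ 2) (pow_mem m0 2)) (hm 1)
    have m2 : z 2 ∈ IntermediateField.adjoin K (Set.range t) := by
      have : z 2 = 48 * z 0 ^ 2 * t 2 := by rw [t2]; field_simp
      rw [this]; exact mul_mem (mul_mem (ofNat_mem _ 48) (pow_mem m0 2)) (hm 2)
    fin_cases i
    · exact m0
    · exact m1
    · exact m2
    · change z 3 ∈ _
      have : z 3 = 4 * z 0 * z 1 * t 3 := by rw [t3]; field_simp
      rw [this]; exact mul_mem (mul_mem (mul_mem (ofNat_mem _ 4) m0) m1) (hm 3)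
    · change z 4 ∈ _
      have : z 4 = 4 * z 0 * z 2 * t 4 := by rw [t4]; field_simp
      rw [this]; exact mul_mem (mul_mem (mul_mem (ofNat_mem _ 4) m0) m2) (hm 4)
end fields

section quint
variable {R S : Type*} [CommRing R] [CommRing S]

def subR (Rl : List (ℤ × List ℕ)) (p : List ℕ) : List (ℤ × List ℕ) :=
  Rl.filter fun t => t.2.drop 6 == p

def cfZ (Rl : List (ℤ × List ℕ)) (p : List ℕ) (z : Fin 5 → R) : R :=
  relZ (subR Rl p) [z 0, 12 * z 0, z 1, z 2, z 3, z 4, 1, 1, 1]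

lemma cfZ_map (f : R →+* S) (Rl p) (z : Fin 5 → R) :
    cfZ Rl p (fun i => f (z i)) = f (cfZ Rl p z) := by
  unfold cfZ
  rw [← relZ_map]
  simp [map_ofNat f 12]

def patN : Fin 5 → List ℕ := ![[0,0,0], [1,0,0], [0,1,0], [0,0,1], [0,2,0]]

def colV (u v w : R) : Fin 5 → R := ![1, u, v, w, v ^ 2]

lemma split16 (z : Fin 5 → R) (u v w : R) :
    relZ Rel16 [z 0, 12 * z 0, z 1, z 2, z 3, z 4, u, v, w] =
      (∑ i, cfZ Rel16 (patN i) z * colV u v w i) + 2025 * u ^ 2 := by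
  simp [Fin.sum_univ_five, cfZ, patN, colV, subR, Rel16, relZ, monZ, List.filter]
  ring
lemma split17 (z : Fin 5 → R) (u v w : R) :
    relZ Rel17 [z 0, 12 * z 0, z 1, z 2, z 3, z 4, u, v, w] =
      (∑ i, cfZ Rel17 (patN i) z * colV u v w i) + 6750 * (u * v) := by
  simp [Fin.sum_univ_five, cfZ, patN, colV, subR, Rel17, relZ, monZ, List.filter]
  ring
lemma split18 (z : Fin 5 → R) (u v w : R) :
    relZ Rel18 [z 0, 12 * z 0, z 1, z 2, z 3, z 4, u, v, w] =
      (∑ i, cfZ Rel18 (patN i) z * colV u v w i) + 455625 * (u * w) := by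
  simp [Fin.sum_univ_five, cfZ, patN, colV, subR, Rel18, relZ, monZ, List.filter]
  ring
lemma split19 (z : Fin 5 → R) (u v w : R) :
    relZ Rel19 [z 0, 12 * z 0, z 1, z 2, z 3, z 4, u, v, w] =
      (∑ i, cfZ Rel19 (patN i) z * colV u v w i) + 33750 * (v * w) := by
  simp [Fin.sum_univ_five, cfZ, patN, colV, subR, Rel19, relZ, monZ, List.filter]
  ring

variable (K : Type*) [Field K] [Algebra K R] [Algebra K S]

def rowZ (Rl : List (ℤ × List ℕ)) (c : K) (z : Fin 5 → R) : Fin 5 → R :=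
  fun i => algebraMap K R (-c⁻¹) * cfZ Rl (patN i) z

def MM (z : Fin 5 → R) : Matrix (Fin 5) (Fin 5) R :=
  ![![0, 1, 0, 0, 0], rowZ K Rel16 2025 z, rowZ K Rel17 6750 z, rowZ K Rel18 455625 z,
    fun j => rowZ K Rel17 6750 z 0 * (![0, 0, 1, 0, 0] : Fin 5 → R) j
      + rowZ K Rel17 6750 z 1 * rowZ K Rel17 6750 z j
      + rowZ K Rel17 6750 z 2 * (![0, 0, 0, 0, 1] : Fin 5 → R) j
      + rowZ K Rel17 6750 z 3 * rowZ K Rel19 33750 z j]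

lemma rowZ_map (f : R →ₐ[K] S) (Rl c) (z : Fin 5 → R) (i) :
    rowZ K Rl c (fun i => f (z i)) i = f (rowZ K Rl c z i) := by
  unfold rowZ
  rw [map_mul, AlgHom.commutes]
  congr 1
  exact cfZ_map f.toRingHom _ _ z

lemma MM_map (f : R →ₐ[K] S) (z : Fin 5 → R) :
    MM K (fun i => f (z i)) = (MM K z).map f := by
  ext i j
  rw [Matrix.map_apply]
  fin_cases i
  · fin_cases j <;> simp [MM]
  · simp [MM, rowZ_map]
  · simp [MM, rowZ_map]
  · simp [MM, rowZ_map]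
  · fin_cases j <;> simp [MM, rowZ_map]

lemma rowZ_eq (Rl) (c : K) (hc : c ≠ 0) (z : Fin 5 → R) (V : Fin 5 → R) (y : R)
    (h : (∑ i, cfZ Rl (patN i) z * V i) + algebraMap K R c * y = 0) :
    rowZ K Rl c z ⬝ᵥ V = y := by
  have h1 : rowZ K Rl c z ⬝ᵥ V = algebraMap K R (-c⁻¹) * ∑ i, cfZ Rl (patN i) z * V i := by
    simp only [dotProduct, rowZ, Finset.mul_sum, mul_assoc]
  have h2 : algebraMap K R c⁻¹ * algebraMap K R c = 1 := by
    rw [← map_mul, inv_mul_cancel₀ hc, map_one]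
  rw [h1, map_neg]
  linear_combination (-algebraMap K R c⁻¹) * h + y * h2

lemma MM_col (hc1 : (2025 : K) ≠ 0) (hc2 : (6750 : K) ≠ 0) (hc3 : (455625 : K) ≠ 0)
    (hc4 : (33750 : K) ≠ 0) (z : Fin 5 → R) (u v w : R)
    (h16 : relZ Rel16 [z 0, 12 * z 0, z 1, z 2, z 3, z 4, u, v, w] = 0)
    (h17 : relZ Rel17 [z 0, 12 * z 0, z 1, z 2, z 3, z 4, u, v, w] = 0)
    (h18 : relZ Rel18 [z 0, 12 * z 0, z 1, z 2, z 3, z 4, u, v, w] = 0)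
    (h19 : relZ Rel19 [z 0, 12 * z 0, z 1, z 2, z 3, z 4, u, v, w] = 0) :
    (MM K z).mulVec (colV u v w) = u • colV u v w := by
  rw [split16] at h16
  rw [split17] at h17
  rw [split18] at h18
  rw [split19] at h19
  have r1 := rowZ_eq K Rel16 2025 hc1 z (colV u v w) (u ^ 2) (by rwa [map_ofNat])
  have r2 := rowZ_eq K Rel17 6750 hc2 z (colV u v w) (u * v) (by rwa [map_ofNat])
  have r3 := rowZ_eq K Rel18 455625 hc3 z (colV u v w) (u * w) (by rwa [map_ofNat])
  have r4 := rowZ_eq K Rel19 33750 hc4 z (colV u v w) (v * w) (by rwa [map_ofNat])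
  have b4 : rowZ K Rel17 6750 z 4 = 0 := by
    have : cfZ Rel17 (patN 4) z = 0 := by
      simp [cfZ, patN, subR, Rel17, relZ, List.filter]
    simp [rowZ, this]
  funext i
  fin_cases i
  · simp [Matrix.mulVec, MM, dotProduct, Fin.sum_univ_five, colV]
  · change rowZ K Rel16 2025 z ⬝ᵥ colV u v w = _
    rw [r1]; simp [colV]; ring
  · change rowZ K Rel17 6750 z ⬝ᵥ colV u v w = _
    rw [r2]; simp [colV]
  · change rowZ K Rel18 455625 z ⬝ᵥ colV u v w = _
    rw [r3]; simp [colV]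
  · simp only [dotProduct, Fin.sum_univ_five, colV, Matrix.cons_val, b4] at r2 r4
    simp [Matrix.mulVec, MM, dotProduct, Fin.sum_univ_five, colV, -mul_eq_mul_left_iff]
    linear_combination rowZ K Rel17 6750 z 1 * r2 + rowZ K Rel17 6750 z 3 * r4 + v * r2 + b4 * (rowZ K Rel17 6750 z 1 * v ^ 2)

lemma MM_root (hc1 : (2025 : K) ≠ 0) (hc2 : (6750 : K) ≠ 0) (hc3 : (455625 : K) ≠ 0)
    (hc4 : (33750 : K) ≠ 0) {E : Type*} [Field E] [Algebra K E] (z : Fin 5 → E) (u v w : E)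
    (h16 : relZ Rel16 [z 0, 12 * z 0, z 1, z 2, z 3, z 4, u, v, w] = 0)
    (h17 : relZ Rel17 [z 0, 12 * z 0, z 1, z 2, z 3, z 4, u, v, w] = 0)
    (h18 : relZ Rel18 [z 0, 12 * z 0, z 1, z 2, z 3, z 4, u, v, w] = 0)
    (h19 : relZ Rel19 [z 0, 12 * z 0, z 1, z 2, z 3, z 4, u, v, w] = 0) :
    (MM K z).charpoly.eval u = 0 := by
  have := MM_col K hc1 hc2 hc3 hc4 z u v w h16 h17 h18 h19
  rw [Matrix.eval_charpoly]
  rw [← Matrix.exists_mulVec_eq_zero_iff]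
  refine ⟨colV u v w, fun h => ?_, ?_⟩
  · have := congrFun h 0
    simp [colV] at this
  · rw [Matrix.sub_mulVec, this, Matrix.scalar_apply, sub_eq_zero]
    ext i
    simp [Matrix.mulVec_diagonal]


lemma row16_psi : rowZ K Rel16 2025 (![0, 0, Polynomial.X, 0, 1] : Fin 5 → Polynomial K) =
    ![0, 0, Polynomial.C (330750 / 2025), 0, 0] := by
  funext i
  fin_cases i <;> simp [rowZ, cfZ, patN, subR, Rel16, relZ, monZ, List.filter]
  rw [div_eq_inv_mul, map_mul, map_ofNat]
lemma row17_psi : rowZ K Rel17 6750 (![0, 0, Polynomial.X, 0, 1] : Fin 5 → Polynomial K) =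
    ![0, 0, 0, Polynomial.C (3375 / 6750), 0] := by
  funext i
  fin_cases i <;> simp [rowZ, cfZ, patN, subR, Rel17, relZ, monZ, List.filter]
  rw [div_eq_inv_mul, map_mul, map_ofNat]
lemma row18_psi : rowZ K Rel18 455625 (![0, 0, Polynomial.X, 0, 1] : Fin 5 → Polynomial K) =
    ![0, 0, 0, 0, Polynomial.C (148837500 / 455625)] := by
  funext i
  fin_cases i <;> simp [rowZ, cfZ, patN, subR, Rel18, relZ, monZ, List.filter]
  rw [div_eq_inv_mul, map_mul, map_ofNat]
lemma row19_psi : rowZ K Rel19 33750 (![0, 0, Polynomial.X, 0, 1] : Fin 5 → Polynomial K) =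
    ![Polynomial.C (-(2126250 / 33750)) * Polynomial.X, 0, Polynomial.C (2126250 / 33750) * Polynomial.X ^ 2, 0, 0] := by
  funext i
  fin_cases i <;> simp [rowZ, cfZ, patN, subR, Rel19, relZ, monZ, List.filter]
  · rw [div_eq_inv_mul, map_mul, map_ofNat]; ring
  · rw [div_eq_inv_mul, map_mul, map_ofNat]; ring

lemma charpoly_psi {R : Type*} [CommRing R] (a b c d e : R) :
    (Matrix.of ![![0, 1, 0, 0, 0], ![0, 0, a, 0, 0], ![0, 0, 0, b, 0], ![0, 0, 0, 0, c],
      ![d, 0, e, 0, 0]]).charpoly = Polynomial.X ^ 5 - Polynomial.C (b * c * e) * Polynomial.X ^ 2 - Polynomial.C (a * b * c * d) := by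
  unfold Matrix.charpoly Matrix.charmatrix
  simp [Matrix.det_succ_row_zero, Fin.sum_univ_succ, Matrix.scalar_apply, Matrix.diagonal, Fin.succAbove]
  ring

lemma MM_psi : MM K (![0, 0, Polynomial.X, 0, 1] : Fin 5 → Polynomial K) =
    Matrix.of ![![0, 1, 0, 0, 0], ![0, 0, Polynomial.C (330750 / 2025), 0, 0], ![0, 0, 0, Polynomial.C (3375 / 6750), 0],
      ![0, 0, 0, 0, Polynomial.C (148837500 / 455625)],
      ![Polynomial.C (3375 / 6750) * (Polynomial.C (-(2126250 / 33750)) * Polynomial.X), 0,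
        Polynomial.C (3375 / 6750) * (Polynomial.C (2126250 / 33750) * Polynomial.X ^ 2), 0, 0]] := by
  unfold MM
  rw [row16_psi, row17_psi, row18_psi, row19_psi]
  ext1 i j
  fin_cases i <;> fin_cases j <;> simp
end quint

section quint2
variable (K : Type*) [Field K]

lemma smooth_num (h : CharOK K) (n a b c d : ℕ) (hn : n = 2 ^ a * 3 ^ b * 5 ^ c * 7 ^ d) :
    (n : K) ≠ 0 := by
  have := smooth_ne h a b c d
  rw [hn]; push_cast; exact this

def psiA : MvPolynomial (Fin 5) K →ₐ[K] Polynomial K :=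
  aeval (![0, 0, Polynomial.X, 0, 1] : Fin 5 → Polynomial K)

lemma psi_aux {K : Type*} [Field K] (a b c d d' : K) :
    (Polynomial.X ^ 5 - Polynomial.C (Polynomial.C b * Polynomial.C c * (Polynomial.C b *
        (Polynomial.C d * Polynomial.X ^ 2))) * Polynomial.X ^ 2
      - Polynomial.C (Polynomial.C a * Polynomial.C b * Polynomial.C c * (Polynomial.C b *
        (Polynomial.C d' * Polynomial.X))) : Polynomial (Polynomial K)) =
    Polynomial.X ^ 5 - Polynomial.C ((Polynomial.C (b * c * b * d) * Polynomial.X) * Polynomial.X)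
        * Polynomial.X ^ 2
      - Polynomial.C (Polynomial.C (a * b * c * b * d') * Polynomial.X) := by
  simp only [map_mul, map_pow]; ring

lemma QQ_psi : ∃ c1 : Polynomial K, (MM K (X : Fin 5 → MvPolynomial (Fin 5) K)).charpoly.map
    (psiA K).toRingHom = Polynomial.X ^ 5
      - Polynomial.C (c1 * Polynomial.X) * Polynomial.X ^ 2
      - Polynomial.C (Polynomial.C (330750 / 2025 * (3375 / 6750) * (148837500 / 455625)
          * (3375 / 6750) * (-(2126250 / 33750))) * Polynomial.X) := by
  refine ⟨Polynomial.C (3375 / 6750 * (148837500 / 455625) * (3375 / 6750) * (2126250 / 33750))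
    * Polynomial.X, ?_⟩
  have e1 : (MM K (X : Fin 5 → MvPolynomial (Fin 5) K)).map (psiA K).toRingHom =
      MM K (![0, 0, Polynomial.X, 0, 1] : Fin 5 → Polynomial K) := by
    have := MM_map K (psiA K) (X : Fin 5 → MvPolynomial (Fin 5) K)
    have e2 : (fun i => psiA K (X i)) = (![0, 0, Polynomial.X, 0, 1] : Fin 5 → Polynomial K) := by
      funext i; simp [psiA]
    rw [e2] at this
    exact this.symm
  rw [← Matrix.charpoly_map, e1, MM_psi, charpoly_psi]
  exact psi_aux _ _ _ _ _

lemma QQ_irr (h : CharOK K) : Irreducible (MM K (X : Fin 5 → MvPolynomial (Fin 5) K)).charpoly := by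
  set Q := (MM K (X : Fin 5 → MvPolynomial (Fin 5) K)).charpoly with hQ
  have hm : Q.Monic := Matrix.charpoly_monic _
  have hd : Q.natDegree = 5 := by rw [hQ, Matrix.charpoly_natDegree_eq_dim]; rfl
  have hdeg : Q.degree = (5 : ℕ) := by rw [Polynomial.degree_eq_natDegree hm.ne_zero, hd]
  obtain ⟨c1, hc1⟩ := QQ_psi K
  rw [← hQ] at hc1
  have hco : ∀ n, psiA K (Q.coeff n) = (Q.map (psiA K).toRingHom).coeff n := by
    intro n; rw [Polynomial.coeff_map]; rfl
  let I : Ideal (Polynomial K) := Ideal.span {Polynomial.X}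
  have hI : I.IsPrime := (Ideal.span_singleton_prime Polynomial.X_ne_zero).2 Polynomial.prime_X
  refine Polynomial.irreducible_of_eisenstein_criterion (P := I.comap (psiA K))
    (Ideal.IsPrime.comap _) ?_ ?_ ?_ ?_ hm.isPrimitive
  · rw [hm.leadingCoeff, Ideal.mem_comap, map_one]
    exact fun hh => hI.ne_top ((Ideal.eq_top_iff_one _).2 hh)
  · intro n hn
    rw [hdeg] at hn
    have hn : n < 5 := by exact_mod_cast hn
    rw [Ideal.mem_comap, hco, hc1, Ideal.mem_span_singleton]
    simp only [Polynomial.coeff_sub, Polynomial.coeff_C_mul, Polynomial.coeff_X_pow, Polynomial.coeff_C]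
    refine dvd_sub (dvd_sub ?_ ?_) ?_
    · rw [if_neg hn.ne]; exact dvd_zero _
    · exact Dvd.dvd.mul_right (Dvd.intro_left _ rfl) _
    · split_ifs
      · exact Dvd.intro_left _ rfl
      · exact dvd_zero _
  · rw [hdeg]; norm_num
  · intro hh
    have h2 : psiA K (Q.coeff 0) ∈ I ^ 2 := by
      have h3 : (I.comap (psiA K)) ^ 2 ≤ (I ^ 2).comap (psiA K) := Ideal.le_comap_pow _ 2
      exact h3 hh
    rw [hco, hc1, Ideal.span_singleton_pow, Ideal.mem_span_singleton, Polynomial.X_pow_dvd_iff] at h2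
    have h3 := h2 1 (by norm_num)
    simp only [Polynomial.coeff_sub, Polynomial.coeff_C_mul, Polynomial.coeff_X_pow, Polynomial.coeff_C,
      if_true, Polynomial.coeff_X_one, mul_one] at h3
    norm_num at h3
    have n1 := smooth_num K h 330750 1 3 3 2 (by norm_num)
    have n2 := smooth_num K h 2025 0 4 2 0 (by norm_num)
    have n3 := smooth_num K h 3375 0 3 3 0 (by norm_num)
    have n4 := smooth_num K h 6750 1 3 3 0 (by norm_num)
    have n5 := smooth_num K h 148837500 2 5 5 2 (by norm_num)
    have n6 := smooth_num K h 455625 0 6 4 0 (by norm_num)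
    have n7 := smooth_num K h 2126250 1 5 4 1 (by norm_num)
    have n8 := smooth_num K h 33750 1 3 4 0 (by norm_num)
    push_cast at n1 n2 n3 n4 n5 n6 n7 n8
    simp [n1, n2, n3, n4, n5, n6, n7, n8] at h3

lemma deg5 (h : CharOK K) {E : Type*} [Field E] [Algebra K E] (z : Fin 5 → E)
    (hz : AlgebraicIndependent K z) (u v w : E)
    (h16 : relZ Rel16 [z 0, 12 * z 0, z 1, z 2, z 3, z 4, u, v, w] = 0)
    (h17 : relZ Rel17 [z 0, 12 * z 0, z 1, z 2, z 3, z 4, u, v, w] = 0)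
    (h18 : relZ Rel18 [z 0, 12 * z 0, z 1, z 2, z 3, z 4, u, v, w] = 0)
    (h19 : relZ Rel19 [z 0, 12 * z 0, z 1, z 2, z 3, z 4, u, v, w] = 0) :
    IsIntegral (IntermediateField.adjoin K (Set.range z)) u ∧
    (minpoly (IntermediateField.adjoin K (Set.range z)) u).natDegree = 5 := by
  have n1 := smooth_num K h 2025 0 4 2 0 (by norm_num)
  have n2 := smooth_num K h 6750 1 3 3 0 (by norm_num)
  have n3 := smooth_num K h 455625 0 6 4 0 (by norm_num)
  have n4 := smooth_num K h 33750 1 3 4 0 (by norm_num)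
  push_cast at n1 n2 n3 n4
  have hroot := MM_root K n1 n2 n3 n4 z u v w h16 h17 h18 h19
  have hirr := QQ_irr K h
  set Q := (MM K (X : Fin 5 → MvPolynomial (Fin 5) K)).charpoly with hQ
  have hm : Q.Monic := Matrix.charpoly_monic _
  have hd : Q.natDegree = 5 := by rw [hQ, Matrix.charpoly_natDegree_eq_dim]; rfl
  have hirr2 := (hm.irreducible_iff_irreducible_map_fraction_map
    (K := FractionRing (MvPolynomial (Fin 5) K))).1 hirr
  let e := hz.aevalEquivField.toRingEquiv
  let P := (Q.map (algebraMap _ (FractionRing (MvPolynomial (Fin 5) K)))).map e.toRingHom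
  have hirr3 : Irreducible P := by
    have := (MulEquiv.irreducible_iff (Polynomial.mapEquiv e)).2 hirr2
    exact this
  have hPm : P.Monic := (hm.map _).map _
  have hPd : P.natDegree = 5 := by rw [(hm.map _).natDegree_map, hm.natDegree_map, hd]
  have hP0 : Polynomial.aeval u P = 0 := by
    have e1 : (MM K (X : Fin 5 → MvPolynomial (Fin 5) K)).map (aeval z : _ →ₐ[K] E).toRingHom = MM K z := by
      have := MM_map K (aeval z : _ →ₐ[K] E) (X : Fin 5 → MvPolynomial (Fin 5) K)
      simp only [aeval_X] at this
      exact this.symm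
    rw [← e1, Matrix.charpoly_map, ← hQ, Polynomial.eval_map] at hroot
    rw [Polynomial.aeval_def, Polynomial.eval₂_map, Polynomial.eval₂_map]
    have e2 : ((algebraMap (IntermediateField.adjoin K (Set.range z)) E).comp e.toRingHom).comp
        (algebraMap _ (FractionRing (MvPolynomial (Fin 5) K))) = (aeval z : _ →ₐ[K] E).toRingHom :=
      RingHom.ext fun a => hz.aevalEquivField_algebraMap_apply_coe a
    rw [e2]
    exact hroot
  have hmin := minpoly.eq_of_irreducible_of_monic hirr3 hP0 hPm
  exact ⟨⟨P, hPm, hP0⟩, by rw [← hmin, hPd]⟩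

lemma minpoly_scale {L E : Type*} [Field L] [Field E] [Algebra L E] (u : E) (c : L) (hc : c ≠ 0)
    (hu : IsIntegral L u) (t : E) (ht : t = algebraMap L E c * u) :
    IsIntegral L t ∧ (minpoly L t).natDegree = (minpoly L u).natDegree := by
  have hi : IsIntegral L t := by rw [ht]; exact isIntegral_algebraMap.mul hu
  refine ⟨hi, ?_⟩
  rw [← IntermediateField.adjoin.finrank hi, ← IntermediateField.adjoin.finrank hu]
  have : IntermediateField.adjoin L {t} = IntermediateField.adjoin L {u} := by
    apply le_antisymm
    · rw [IntermediateField.adjoin_simple_le_iff, ht]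
      exact mul_mem (IntermediateField.algebraMap_mem _ _) (IntermediateField.mem_adjoin_simple_self _ _)
    · rw [IntermediateField.adjoin_simple_le_iff]
      have : u = algebraMap L E c⁻¹ * t := by
        rw [ht, ← mul_assoc, ← map_mul, inv_mul_cancel₀ hc, map_one, one_mul]
      rw [this]
      exact mul_mem (IntermediateField.algebraMap_mem _ _) (IntermediateField.mem_adjoin_simple_self _ _)
  rw [this]
end quint2

section fin
variable (K : Type*) [Field K]

def Zg (i : ℕ) : FractionRing (MvPolynomial (Fin 9) K) := (JZ (ext9 (genA K))).getD i 0

lemma Zg_indep (h : CharOK K) : AlgebraicIndependent K (fun i : Fin 6 => Zg K i) := by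
  have h1 := (Jpol_indep h).map' (f := IsScalarTower.toAlgHom K (MvPolynomial (Fin 9) K)
    (FractionRing (MvPolynomial (Fin 9) K)))
    (IsFractionRing.injective (MvPolynomial (Fin 9) K) (FractionRing (MvPolynomial (Fin 9) K)))
  refine swap_indep _ _ h1 fun i => ?_
  have e1 : algebraMap (MvPolynomial (Fin 9) K) (FractionRing (MvPolynomial (Fin 9) K))
      ((JZ (ext9 X)).getD i 0) = Zg K i := by
    unfold Zg
    rw [← getD_JZ_map]
    congr 2
    exact (ext9_map _ X).symm
  change algebraMap (MvPolynomial (Fin 9) K) (FractionRing (MvPolynomial (Fin 9) K)) (Jpol K i) ∈ _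
  unfold Jpol
  rw [map_mul, e1]
  refine mul_mem ?_ (IntermediateField.subset_adjoin _ _ ⟨i, rfl⟩)
  have : algebraMap (MvPolynomial (Fin 9) K) (FractionRing (MvPolynomial (Fin 9) K))
      (C (1 / (gam i : K))) = algebraMap K _ (1 / (gam i : K)) := by
    rw [IsScalarTower.algebraMap_apply K (MvPolynomial (Fin 9) K)]; rfl
  rw [this]
  exact IntermediateField.algebraMap_mem _ _

lemma relZ_theta (h : CharOK K) (w : FractionRing (MvPolynomial (Fin 9) K)) :
    relZ Rel16 (scl w 2 (JZ (ext9 (genA K)))) = 0 ∧ relZ Rel17 (scl w 2 (JZ (ext9 (genA K)))) = 0 ∧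
    relZ Rel18 (scl w 2 (JZ (ext9 (genA K)))) = 0 ∧ relZ Rel19 (scl w 2 (JZ (ext9 (genA K)))) = 0 := by
  have h' : CharOK (FractionRing (MvPolynomial (Fin 9) K)) := h.map
  refine ⟨?_, ?_, ?_, ?_⟩
  · rw [relZ_scl w 16 _ _ rfl (by decide), rel16 h', mul_zero]
  · rw [relZ_scl w 17 _ _ rfl (by decide), rel17 h', mul_zero]
  · rw [relZ_scl w 18 _ _ rfl (by decide), rel18 h', mul_zero]
  · rw [relZ_scl w 19 _ _ rfl (by decide), rel19 h', mul_zero]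

lemma main_all (h : CharOK K) :
    AlgebraicIndependent K ![T1 K, T2 K, T3 K, T4 K, T5 K] ∧
    IsAlgebraic (IntermediateField.adjoin K (Set.range ![T1 K, T2 K, T3 K, T4 K, T5 K])) (T6 K) ∧
    (minpoly (IntermediateField.adjoin K (Set.range ![T1 K, T2 K, T3 K, T4 K, T5 K])) (T6 K)).natDegree
      = 5 := by
  have h' : CharOK (FractionRing (MvPolynomial (Fin 9) K)) := h.map
  have n12 := smooth_num K h 12 2 1 0 0 (by norm_num)
  push_cast at n12
  have m12 := smooth_num _ h' 12 2 1 0 0 (by norm_num)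
  push_cast at m12
  have hZ := Zg_indep K h
  obtain ⟨θ, hθ⟩ : ∃ θ, θ = Zg K 1 / (12 * Zg K 0) := ⟨_, rfl⟩
  have hz := zz_indep n12 _ hZ θ hθ
  have n0 : Zg K 0 ≠ 0 := hZ.ne_zero 0
  have n1 : Zg K 1 ≠ 0 := hZ.ne_zero 1
  have n2 : Zg K 2 ≠ 0 := hZ.ne_zero 2
  have n3 : Zg K 3 ≠ 0 := hZ.ne_zero 3
  have nθ : θ ≠ 0 := by rw [hθ]; exact div_ne_zero n1 (mul_ne_zero m12 n0)
  have e1 : Zg K 1 = 12 * Zg K 0 * θ := by rw [hθ]; field_simp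
  set z : Fin 5 → FractionRing (MvPolynomial (Fin 9) K) := ![Zg K 0 / θ ^ 2, Zg K 2 / θ ^ 4,
    Zg K 3 / θ ^ 5, Zg K 4 / θ ^ 6, Zg K 5 / θ ^ 7] with hzdef
  have hz : AlgebraicIndependent K z := hz
  have E2 : J2 (genA K) = 1 / 2 * Zg K 0 := J2_eq h' _
  have E3 : J3 (genA K) = 1 / 24 * Zg K 1 := J3_eq h' _
  have E4 : J4 (genA K) = 1 / 8 * Zg K 2 := J4_eq h' _
  have E5 : J5 (genA K) = 1 / 192 * Zg K 3 := J5_eq h' _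
  have E6 : J6 (genA K) = 1 / 64 * Zg K 4 := J6_eq h' _
  have E7 : J7 (genA K) = 1 / 1536 * Zg K 5 := J7_eq h' _
  have E8 : J8 (genA K) = 1 / 3072 * Zg K 6 := J8_eq h' _
  have q2 := h'.two
  have q3 := h'.three
  have q4 : ((4 : ℕ) : FractionRing (MvPolynomial (Fin 9) K)) ≠ 0 := smooth_num _ h' 4 2 0 0 0 (by norm_num)
  have q24 := smooth_num _ h' 24 3 1 0 0 (by norm_num)
  have q8 := smooth_num _ h' 8 3 0 0 0 (by norm_num)
  have q192 := smooth_num _ h' 192 6 1 0 0 (by norm_num)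
  have q64 := smooth_num _ h' 64 6 0 0 0 (by norm_num)
  have q48 := smooth_num _ h' 48 4 1 0 0 (by norm_num)
  have q1536 := smooth_num _ h' 1536 9 1 0 0 (by norm_num)
  have q3072 := smooth_num _ h' 3072 10 1 0 0 (by norm_num)
  push_cast at q4 q24 q8 q192 q64 q48 q1536 q3072
  have t0 : T1 K = 2 / z 0 := by
    change _ = 2 / (Zg K 0 / θ ^ 2)
    rw [T1, E2, E3, e1]; field_simp; norm_num
  have t1 : T2 K = z 1 / (2 * z 0 ^ 2) := by
    change _ = (Zg K 2 / θ ^ 4) / (2 * (Zg K 0 / θ ^ 2) ^ 2)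
    rw [T2, E2, E4]; field_simp; norm_num
  have t2 : T3 K = z 2 / (48 * z 0 ^ 2) := by
    change _ = (Zg K 3 / θ ^ 5) / (48 * (Zg K 0 / θ ^ 2) ^ 2)
    rw [T3, E2, E3, E5, e1]; field_simp; norm_num
  have t3 : T4 K = z 3 / (4 * z 0 * z 1) := by
    change _ = (Zg K 4 / θ ^ 6) / (4 * (Zg K 0 / θ ^ 2) * (Zg K 2 / θ ^ 4))
    rw [T4, E2, E4, E6]; field_simp; ring
  have t4 : T5 K = z 4 / (4 * z 0 * z 2) := by
    change _ = (Zg K 5 / θ ^ 7) / (4 * (Zg K 0 / θ ^ 2) * (Zg K 3 / θ ^ 5))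
    rw [T5, E2, E5, E7]; field_simp; ring
  have t5 : T6 K = 1 / (192 * z 0 ^ 4) * (Zg K 6 / θ ^ 8) := by
    change _ = 1 / (192 * (Zg K 0 / θ ^ 2) ^ 4) * (Zg K 6 / θ ^ 8)
    rw [T6, E2, E8]; field_simp; ring
  have hadj := tt_adjoin h.two h.three z ![T1 K, T2 K, T3 K, T4 K, T5 K] hz.ne_zero t0 t1 t2 t3 t4
  refine ⟨swap_indep z _ hz fun i => ?_, ?_⟩
  · rw [hadj]; exact IntermediateField.subset_adjoin _ _ ⟨i, rfl⟩
  rw [hadj]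
  obtain ⟨r16, r17, r18, r19⟩ := relZ_theta K h θ⁻¹
  have hl : scl θ⁻¹ 2 (JZ (ext9 (genA K))) = [z 0, 12 * z 0, z 1, z 2, z 3, z 4,
      Zg K 6 / θ ^ 8, Zg K 7 / θ ^ 9, Zg K 8 / θ ^ 10] := by
    have hJ : JZ (ext9 (genA K)) = [Zg K 0, Zg K 1, Zg K 2, Zg K 3, Zg K 4, Zg K 5, Zg K 6, Zg K 7, Zg K 8] := rfl
    have a1 : 12 * z 0 = Zg K 1 / θ ^ 3 := by
      change 12 * (Zg K 0 / θ ^ 2) = _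
      rw [e1]; field_simp
    rw [hJ, a1]
    simp only [scl, hzdef, Matrix.cons_val, inv_pow, ← div_eq_inv_mul]
  rw [hl] at r16 r17 r18 r19
  obtain ⟨hi, hd⟩ := deg5 K h z hz _ _ _ r16 r17 r18 r19
  have hz0 : z 0 ∈ IntermediateField.adjoin K (Set.range z) := IntermediateField.subset_adjoin _ _ ⟨0, rfl⟩
  let c : IntermediateField.adjoin K (Set.range z) :=
    ⟨1 / (192 * z 0 ^ 4), div_mem (one_mem _) (mul_mem (ofNat_mem _ 192) (pow_mem hz0 4))⟩
  have hc : c ≠ 0 := by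
    intro hc
    have : (1 / (192 * z 0 ^ 4)) = 0 := congrArg Subtype.val hc
    exact div_ne_zero one_ne_zero (mul_ne_zero q192 (pow_ne_zero 4 (hz.ne_zero 0))) this
  obtain ⟨a, b⟩ := minpoly_scale (Zg K 6 / θ ^ 8) c hc hi (T6 K) t5
  exact ⟨a.isAlgebraic, b.trans hd⟩
end fin

/-- The field `k(t_1, ..., t_6)` has transcendence degree 5 over `k`: the absolute
invariants `t_1, ..., t_5` are algebraically independent over `k`, and `t_6` is algebraic
of degree exactly 5 over `k(t_1, ..., t_5)`. -/
theorem absolute_invariants_trdeg (K : Type*) [Field K] [IsAlgClosed K] (hK : CharOK K) :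
    AlgebraicIndependent K ![T1 K, T2 K, T3 K, T4 K, T5 K] ∧
    IsAlgebraic (IntermediateField.adjoin K {T1 K, T2 K, T3 K, T4 K, T5 K}) (T6 K) ∧
    (minpoly (IntermediateField.adjoin K {T1 K, T2 K, T3 K, T4 K, T5 K}) (T6 K)).natDegree
      = 5 := by
  have hs : ({T1 K, T2 K, T3 K, T4 K, T5 K} : Set (FractionRing (MvPolynomial (Fin 9) K))) =
      Set.range ![T1 K, T2 K, T3 K, T4 K, T5 K] := by
    simp only [Matrix.range_cons, Matrix.range_empty, Set.union_empty, Set.singleton_union]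
  rw [hs]
  exact main_all K hK
end
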